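/- For every positive integer k there exist constants C, D > 0 depending only on k with the following property: let α : G_1 × ⋯ × G_k → 𝔽^r be a multiaffine map, let S ⊆ 𝔽^r and let ε > 0. Define the set of ε-dense columns X = {x ∈ G_1 × ⋯ × G_{k−1} : |{y ∈ G_k : α(x, y) ∈ S}| ≥ ε·|G_k|}. Then there exist s ≤ C·(r·log_{|𝔽|}(|𝔽|·ε^{-1}))^D and a multiaffine map β : G_1 × ⋯ × G_{k−1} → 𝔽^s such that the layers of β both internally ε-approximate and externally ε-approximate X. -/

import Mathlib

/-- A map `f : G 0 × ⋯ × G (k-1) → H` between `𝔽`-vector spaces is *multiaffine*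
if it is affine in each coordinate separately, i.e. fixing all coordinates but the
`i`-th one yields a map of the form `y ↦ g y + h` with `g` linear. -/
def IsMultiaffine (𝔽 : Type*) [Field 𝔽] {ι : Type*} [DecidableEq ι] {G : ι → Type*}
    [∀ i, AddCommGroup (G i)] [∀ i, Module 𝔽 (G i)]
    {H : Type*} [AddCommGroup H] [Module 𝔽 H] (f : (∀ i, G i) → H) : Prop :=
  ∀ (i : ι) (x : ∀ j, G j), ∃ (g : G i →ₗ[𝔽] H) (h : H),
    ∀ y : G i, f (Function.update x i y) = g y + h

/-!
Write `α (x, y) = T x y + α (x, 0)` with `T x` linear. Up to a permutation of the last factor, the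
column over `x` depends only on `α (x, 0)` and on the range of `T x`, that is, on the linear
relations between the components of `T x`. So `β` has to determine, for all but a small proportion
of the `x`, which relations hold at `x`.

To make relations persist along the layers of `β`, expand the components of `T` into multilinear
parts. A union bound discards the relations which hold only rarely. A relation which holds often
has a maximal multilinear part which vanishes often, and hence is a sum of few products `h • C` of
multilinear maps in complementary variables. With the scalar maps `h` adjoined to `β` and the
maps `C` to the components of `T`, this part disappears, and one concludes by induction. To keep new
relations from appearing along a layer, evaluate `T` at a few random points `y` and adjoin the
values to `β`.

That a multilinear map vanishing often has bounded partition rank is proved by induction on the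
number of variables: a slice vanishes often, so by induction it vanishes on a dense variety of
bounded codimension, and by averaging the slice can be chosen so that the map has bounded rank in
the sliced variable on all of this variety. A nonzero polarised minor of maximal order then
expresses the map by its values on a grid, up to an error which vanishes often and has fewer
variables.
-/

open Finset Function Module Polynomial

section Counting

variable {ι : Type*} [DecidableEq ι] {G : ι → Type*} [∀ i, Finite (G i)]

theorem sum_ncard_update_eq [Fintype (∀ i, G i)] (i : ι) (P : (∀ i, G i) → Prop) :
    ∑ x, {a | P (update x i a)}.ncard = Nat.card (G i) * {x | P x}.ncard := by
  let exchange : (Σ x : ∀ i, G i, {a // P (update x i a)}) ≃ G i × {x // P x} :=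
    { toFun := fun p => (p.1 i, ⟨update p.1 i p.2, p.2.2⟩)
      invFun := fun p => ⟨update p.2 i p.1, p.2.1 i, by simpa using p.2.2⟩
      left_inv := by rintro ⟨x, a, ha⟩; simp [Sigma.ext_iff, Subtype.heq_iff_coe_eq]
      right_inv := by rintro ⟨a, x, hx⟩; simp }
  have hcard := Nat.card_congr exchange
  rwa [Nat.card_sigma, Nat.card_prod] at hcard

theorem mul_ncard_le_mul_ncard_of_update [Finite ι] [∀ i, Nonempty (G i)] (i : ι)
    {P Q : (∀ i, G i) → Prop} {a b : ℕ}
    (h : ∀ x, a * {u | P (update x i u)}.ncard ≤ b * {u | Q (update x i u)}.ncard) :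
    a * {x | P x}.ncard ≤ b * {x | Q x}.ncard := by
  have := Fintype.ofFinite (∀ i, G i)
  refine Nat.le_of_mul_le_mul_left ?_ (Nat.card_pos (α := G i))
  rw [mul_left_comm, mul_left_comm _ b, ← sum_ncard_update_eq, ← sum_ncard_update_eq,
    mul_sum, mul_sum]
  exact sum_le_sum fun x _ => h x

theorem card_le_ncard_piecewise_mul_pow [Finite ι] [∀ i, Nonempty (G i)] {K : Finset ι}
    {P : ℕ → (∀ i, G i) → Prop} {M : ℕ}
    (h : ∀ n x, P (n + 1) x → ∀ i ∈ K, Nat.card (G i) ≤ {u | P n (update x i u)}.ncard * M)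
    {x : ∀ i, G i} (hx : P #K x) :
    Nat.card (∀ i, G i) ≤ {z | P 0 (K.piecewise z x)}.ncard * M ^ #K := by
  induction K using Finset.induction_on generalizing P with
  | empty => simp_all
  | insert i K hi ih =>
    rw [card_insert_of_notMem hi] at hx ⊢
    refine (ih (P := fun n => P (n + 1)) (fun n y hy j hj => h _ y hy j (mem_insert_of_mem hj))
      hx).trans ?_
    rw [pow_succ', ← mul_assoc]
    gcongr
    suffices 1 * {z | P 1 (K.piecewise z x)}.ncard ≤
        M * {z | P 0 ((insert i K).piecewise z x)}.ncard by simpa [mul_comm] using this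
    refine mul_ncard_le_mul_ncard_of_update i fun z => ?_
    have hP : ∀ u, K.piecewise (update z i u) x = K.piecewise z x := fun u =>
      Finset.piecewise_congr _ (fun j hj => update_of_ne (ne_of_mem_of_not_mem hj hi) _ _)
        fun _ _ => rfl
    simp only [hP, piecewise_insert, update_self, one_mul, mul_comm M]
    by_cases hz : P 1 (K.piecewise z x)
    · simpa [hz, Set.ncard_univ] using h 0 _ hz i (mem_insert_self i K)
    · simp [hz]

theorem sum_ncard_comm {α β : Type*} [Fintype α] [Fintype β] (P : α → β → Prop) :
    ∑ a, {b | P a b}.ncard = ∑ b, {a | P a b}.ncard := by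
  classical
  simp only [Set.ncard_eq_toFinset_card', Set.toFinset_ofPred]
  exact sum_card_bipartiteAbove_eq_sum_card_bipartiteBelow P

theorem ncard_exists_mul_le {Ω κ : Type*} [Finite κ] {P : κ → Ω → Prop} {b : ℕ}
    (h : ∀ c, {x | P c x}.ncard * (Nat.card κ * b) ≤ Nat.card Ω) :
    {x | ∃ c, P c x}.ncard * b ≤ Nat.card Ω := by
  have := Fintype.ofFinite κ
  rcases isEmpty_or_nonempty κ with hκ | hκ
  · simp
  refine Nat.le_of_mul_le_mul_left ?_ (Nat.card_pos (α := κ))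
  calc Nat.card κ * ({x | ∃ c, P c x}.ncard * b)
      ≤ Nat.card κ * ((∑ c, {x | P c x}.ncard) * b) := by
        rw [Set.ofPred_exists]
        gcongr
        exact Set.ncard_iUnion_le_of_fintype _
    _ = ∑ c, {x | P c x}.ncard * (Nat.card κ * b) := by rw [← sum_mul]; ring
    _ ≤ Nat.card κ * Nat.card Ω := by
        rw [Nat.card_eq_fintype_card (α := κ), ← Finset.card_univ, ← smul_eq_mul]
        exact sum_le_card_nsmul _ _ _ fun c _ => by simpa using h c

theorem exists_ncard_mul_le {Ω Y : Type*} [Finite Ω] [Finite Y] [Nonempty Y] {P : Ω → Y → Prop}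
    {b : ℕ} (h : ∀ x, {y | P x y}.ncard * b ≤ Nat.card Y) :
    ∃ y, {x | P x y}.ncard * b ≤ Nat.card Ω := by
  have := Fintype.ofFinite Ω
  have := Fintype.ofFinite Y
  suffices ∃ y ∈ univ, {x | P x y}.ncard * b ≤ Nat.card Ω by simpa using this
  refine exists_le_of_sum_le univ_nonempty ?_
  rw [← sum_mul, ← sum_ncard_comm, sum_mul]
  refine (sum_le_card_nsmul univ _ _ fun x _ => h x).trans_eq ?_
  simp [mul_comm]

theorem ncard_mul_pow_le_of_subset_union {Ω : Type*} [Finite Ω] {A B C : Set Ω} {q t M : ℕ}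
    (hq : 2 ≤ q) (hA : A ⊆ B ∪ C) (hB : B.ncard * q ^ (t + 1) ≤ M)
    (hC : C.ncard * q ^ (t + 1) ≤ M) : A.ncard * q ^ t ≤ M := by
  refine Nat.le_of_mul_le_mul_left ?_ two_pos
  calc 2 * (A.ncard * q ^ t) = A.ncard * (q ^ t * 2) := by ring
    _ ≤ (B.ncard + C.ncard) * q ^ (t + 1) := by
      rw [pow_succ]
      gcongr
      exact (Set.ncard_le_ncard hA).trans (Set.ncard_union_le _ _)
    _ ≤ 2 * M := by linarith

end Counting

theorem exists_forall_eval_le_pow (p : ℕ[X]) : ∃ a, ∀ t, p.eval t ≤ (t + 2) ^ a := by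
  induction p using Polynomial.induction_on' with
  | monomial n c =>
    refine ⟨c + n, fun t => ?_⟩
    rw [eval_monomial, pow_add]
    have hc : c ≤ (t + 2) ^ c := (Nat.lt_pow_self (by omega)).le
    gcongr
    omega
  | add p q hp hq =>
    obtain ⟨a, ha⟩ := hp
    obtain ⟨b, hb⟩ := hq
    refine ⟨max a b + 1, fun t => ?_⟩
    have hle : ∀ {c}, c ≤ max a b → (t + 2) ^ c ≤ (t + 2) ^ max a b :=
      fun h => Nat.pow_le_pow_right (by omega) h
    calc (p + q).eval t ≤ (t + 2) ^ max a b + (t + 2) ^ max a b := by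
          rw [eval_add]
          exact add_le_add ((ha t).trans (hle (le_max_left a b)))
            ((hb t).trans (hle (le_max_right a b)))
      _ = (t + 2) ^ max a b * 2 := by ring
      _ ≤ (t + 2) ^ (max a b + 1) := by rw [pow_succ]; gcongr; omega

section LinearAlgebra

variable {F U W : Type*} [Field F] [AddCommGroup U] [Module F U] [AddCommGroup W] [Module F W]

theorem finrank_range_add_le [Module.Finite F U] (f g : U →ₗ[F] W) :
    finrank F (f + g).range ≤ finrank F f.range + finrank F g.range := by
  have hle : (f + g).range ≤ f.range ⊔ g.range := by
    rintro _ ⟨u, rfl⟩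
    exact Submodule.add_mem_sup ⟨u, rfl⟩ ⟨u, rfl⟩
  exact (Submodule.finrank_mono hle).trans (Submodule.finrank_add_le_finrank_add_finrank _ _)

theorem det_eq_zero_of_finrank_range_lt {α : Type*} [Fintype α] [DecidableEq α]
    [Module.Finite F U] (f : U →ₗ[F] W) (h : finrank F f.range < Fintype.card α) (u : α → U)
    (w : α → W →ₗ[F] F) : (Matrix.of fun j l => w j (f (u l))).det = 0 := by
  have hdep : ¬ LinearIndependent F fun l => f.rangeRestrict (u l) := fun hli =>
    h.not_ge hli.fintype_card_le_finrank
  obtain ⟨c, hc, i, hi⟩ := Fintype.not_linearIndependent_iff.mp hdep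
  have hc' : ∑ l, c l • f (u l) = 0 := by simpa using congrArg Subtype.val hc
  refine Matrix.exists_mulVec_eq_zero_iff.mp ⟨c, fun h0 => hi (congrFun h0 i), funext fun j => ?_⟩
  simpa [Matrix.mulVec, dotProduct, mul_comm] using congrArg (w j) hc'

variable [Finite U]

theorem ncard_ker_mul_card_pow_finrank_range (f : U →ₗ[F] W) :
    {u | f u = 0}.ncard * Nat.card F ^ finrank F f.range = Nat.card U := by
  have hker : {u | f u = 0}.ncard = Nat.card f.ker := rfl
  rw [hker, natCard_eq_pow_finrank (K := F) (V := f.ker),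
    natCard_eq_pow_finrank (K := F) (V := U), ← pow_add, add_comm, f.finrank_range_add_finrank_ker]

theorem card_le_ncard_forall_eq_zero_mul [Finite F] {σ : Type*} [Finite σ] (l : σ → U →ₗ[F] F) :
    Nat.card U ≤ {u | ∀ j, l j u = 0}.ncard * Nat.card F ^ Nat.card σ := by
  have := Fintype.ofFinite σ
  have hker : {u | ∀ j, l j u = 0} = {u | LinearMap.pi l u = 0} := by
    ext u
    simp [funext_iff]
  rw [← ncard_ker_mul_card_pow_finrank_range (LinearMap.pi l), hker]
  gcongr
  · exact Nat.card_pos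
  · exact (Submodule.finrank_le _).trans (by simp)

end LinearAlgebra

section PolarizedDeterminant

variable {R α κ : Type*} [CommRing R] [Fintype α] [DecidableEq α] [Fintype κ] [DecidableEq κ]

/-- The polarised determinant of a family of matrices `(φ j l b)_{j, l}` indexed by `b : κ → α`:
the determinant in which, for each `i : κ`, the rows use each index of `α` exactly once as the
`i`-th coordinate of `b`, summed over all ways to do so. -/
def polarizedDet (φ : α → α → (κ → α) → R) : R :=
  ∑ π : κ → Equiv.Perm α, (Matrix.of fun j l => φ j l fun i => π i j).det

theorem sum_neg_one_pow_card_compl_of_forall_mem (g : α → α) [Decidable (Surjective g)] :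
    ∑ S : Finset α, (if ∀ j, g j ∈ S then (-1) ^ #Sᶜ else 0 : ℤ) = if Surjective g then 1 else 0 :=
  calc ∑ S : Finset α, (if ∀ j, g j ∈ S then (-1) ^ #Sᶜ else 0 : ℤ)
      = ∑ S : Finset α, (if S ∈ (univ.image g)ᶜ.powerset then (-1) ^ #S else 0 : ℤ) := by
        refine Fintype.sum_equiv compl_involutive.toPerm _ _ fun S => if_congr ?_ rfl rfl
        simp [image_subset_iff]
    _ = if (univ.image g)ᶜ = ∅ then 1 else 0 := by
        rw [← sum_filter, filter_univ_mem, sum_powerset_neg_one_pow_card]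
    _ = if Surjective g then 1 else 0 := by
        refine if_congr ?_ rfl rfl
        simp [Finset.eq_univ_iff_forall, Surjective]

theorem sum_sign_mul_sum_piFinset_eq_sum_perm (Ψ : (α → κ → α) → R) :
    ∑ S : κ → Finset α, ((∏ i, (-1) ^ #(S i)ᶜ : ℤ) : R) *
        ∑ B ∈ Fintype.piFinset fun _ => Fintype.piFinset S, Ψ B =
      ∑ π : κ → Equiv.Perm α, Ψ fun j i => π i j := by
  classical
  calc ∑ S : κ → Finset α, ((∏ i, (-1) ^ #(S i)ᶜ : ℤ) : R) *
        ∑ B ∈ Fintype.piFinset fun _ => Fintype.piFinset S, Ψ B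
      = ∑ B, ((∑ S : κ → Finset α, ∏ i, if ∀ j, B j i ∈ S i then (-1) ^ #(S i)ᶜ else 0 : ℤ) : R) *
          Ψ B := by
        simp only [Int.cast_sum, sum_mul]
        rw [sum_comm]
        refine sum_congr rfl fun S _ => ?_
        rw [mul_sum, ← Finset.filter_univ_mem (Fintype.piFinset _), sum_filter]
        refine sum_congr rfl fun B _ => ?_
        rw [Fintype.prod_ite_zero, Int.cast_ite, Int.cast_zero, ite_mul, zero_mul]
        refine if_congr ?_ rfl rfl
        simpa only [Fintype.mem_piFinset] using forall_comm
    _ = ∑ B, if ∀ i, Surjective fun j => B j i then Ψ B else 0 := by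
        refine sum_congr rfl fun B _ => ?_
        rw [← Fintype.prod_sum fun i (S : Finset α) =>
          (if ∀ j, B j i ∈ S then (-1) ^ #Sᶜ else 0 : ℤ)]
        simp only [sum_neg_one_pow_card_compl_of_forall_mem, Fintype.prod_ite_zero, prod_const_one,
          Int.cast_ite, Int.cast_one, Int.cast_zero, ite_mul, one_mul, zero_mul]
    _ = ∑ π : κ → Equiv.Perm α, Ψ fun j i => π i j := by
        rw [← sum_filter]
        symm
        refine sum_bij (fun π _ j i => π i j) (fun π _ => by simpa using fun i => (π i).surjective)
          (fun π _ π' _ h => funext fun i => Equiv.ext fun j => congrFun (congrFun h j) i)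
          (fun B hB => ?_) fun _ _ => rfl
        have hsurj : ∀ i, Surjective fun j => B j i := by simpa using hB
        exact ⟨fun i => Equiv.ofBijective _ (Finite.surjective_iff_bijective.mp (hsurj i)),
          mem_univ _, rfl⟩

/-- Inclusion–exclusion over the sets `S i` isolates, among all choices of one multi-index per row,
those in which every coordinate runs through a permutation. -/
theorem polarizedDet_eq_zero_of_forall_det_sum_eq_zero (φ : α → α → (κ → α) → R)
    (h : ∀ S : κ → Finset α,
      (Matrix.of fun j l => ∑ b ∈ Fintype.piFinset S, φ j l b).det = 0) :
    polarizedDet φ = 0 := by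
  rw [polarizedDet,
    ← sum_sign_mul_sum_piFinset_eq_sum_perm fun B => (Matrix.of fun j l => φ j l (B j)).det]
  refine sum_eq_zero fun S _ => mul_eq_zero_of_right _ ((Eq.symm ?_).trans (h S))
  have hrow : (Matrix.of fun j l => ∑ b ∈ Fintype.piFinset S, φ j l b) =
      fun j => ∑ b ∈ Fintype.piFinset S, fun l => φ j l b := by
    ext j l
    simp
  rw [hrow]
  exact Matrix.detRowAlternating.toMultilinearMap.map_sum_finset (fun j b l => φ j l b) _

theorem sum_perm_fin_succ_pi {m : ℕ} (g : (κ → Fin (m + 1) → Fin (m + 1)) → R) :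
    ∑ π : κ → Equiv.Perm (Fin (m + 1)), g (fun i => π i) =
      ∑ b : κ → Fin (m + 1), ∑ ε : κ → Equiv.Perm (Fin m),
        g fun i => Fin.cons (b i) ((b i).succAbove ∘ ε i) := by
  let values (p : Fin (m + 1) × Equiv.Perm (Fin m)) : Fin (m + 1) → Fin (m + 1) :=
    Fin.cons p.1 (p.1.succAbove ∘ p.2)
  have hinj : ∀ p, Injective (values p) := fun p =>
    Fin.cons_injective_iff.mpr ⟨by simp, Fin.succAbove_right_injective.comp p.2.injective⟩
  let insertFirst (p : Fin (m + 1) × Equiv.Perm (Fin m)) : Equiv.Perm (Fin (m + 1)) :=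
    Equiv.ofBijective (values p) (Finite.injective_iff_bijective.mp (hinj p))
  have hbij : Bijective insertFirst := by
    refine (Fintype.bijective_iff_injective_and_card _).mpr ⟨fun p p' h => ?_, ?_⟩
    · have hvalues : values p = values p' := congrArg DFunLike.coe h
      obtain ⟨hb, hε⟩ := Fin.cons_injective2 hvalues
      rw [← hb] at hε
      exact Prod.ext hb (Equiv.ext fun j => Fin.succAbove_right_injective (congrFun hε j))
    · simp [Fintype.card_perm, Nat.factorial_succ]
  rw [← Fintype.sum_prod_type']
  exact (Fintype.sum_equiv ((Equiv.arrowProdEquivProdArrow κ (fun _ => Fin (m + 1))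
    fun _ => Equiv.Perm (Fin m)).symm.trans
      (Equiv.piCongrRight fun _ => Equiv.ofBijective insertFirst hbij)) _ _ fun _ => rfl).symm

/-- The cofactor of the entry `φ 0 l b` in the polarised determinant of order `m + 1`; the
argument `φ` consists of the remaining rows. -/
def polarizedCofactor {m : ℕ} (φ : Fin m → Fin (m + 1) → (κ → Fin (m + 1)) → R)
    (l : Fin (m + 1)) (b : κ → Fin (m + 1)) : R :=
  (-1) ^ (l : ℕ) * ∑ ε : κ → Equiv.Perm (Fin m),
    (Matrix.of fun j l' => φ j (l.succAbove l') fun i => (b i).succAbove (ε i j)).det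

theorem polarizedDet_succ {m : ℕ} (φ : Fin (m + 1) → Fin (m + 1) → (κ → Fin (m + 1)) → R) :
    polarizedDet φ = ∑ l, ∑ b, φ 0 l b * polarizedCofactor (fun j => φ j.succ) l b := by
  simp only [polarizedDet, Matrix.det_succ_row_zero, polarizedCofactor]
  rw [sum_comm]
  refine sum_congr rfl fun l _ => ?_
  rw [sum_perm_fin_succ_pi fun f => (-1) ^ (l : ℕ) *
    (Matrix.of fun j l => φ j l fun i => f i j) 0 l *
      ((Matrix.of fun j l => φ j l fun i => f i j).submatrix Fin.succ l.succAbove).det]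
  refine sum_congr rfl fun b _ => ?_
  rw [mul_left_comm, mul_sum, mul_sum]
  refine sum_congr rfl fun ε _ => ?_
  rw [mul_assoc]
  rfl

theorem polarizedCofactor_zero {m : ℕ} (φ : Fin m → Fin (m + 1) → (κ → Fin (m + 1)) → R) :
    polarizedCofactor φ 0 0 = polarizedDet fun j l b => φ j l.succ fun i => (b i).succ := by
  simp [polarizedCofactor, polarizedDet]

end PolarizedDeterminant

/-- `f` is linear in each of the coordinates in `I` and does not depend on the other ones. -/
structure IsMultilinearOn (R : Type*) [CommRing R] {ι : Type*} [DecidableEq ι] {G : ι → Type*}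
    [∀ i, AddCommGroup (G i)] [∀ i, Module R (G i)] {W : Type*} [AddCommGroup W] [Module R W]
    (I : Finset ι) (f : (∀ i, G i) → W) : Prop where
  map_update_add : ∀ i ∈ I, ∀ x a b, f (update x i (a + b)) = f (update x i a) + f (update x i b)
  map_update_smul : ∀ i ∈ I, ∀ x (c : R) a, f (update x i (c • a)) = c • f (update x i a)
  map_update_of_notMem : ∀ i ∉ I, ∀ x a, f (update x i a) = f x

namespace IsMultilinearOn

variable {R ι : Type*} [CommRing R] [DecidableEq ι] {G : ι → Type*} [∀ i, AddCommGroup (G i)]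
  [∀ i, Module R (G i)] {W W' : Type*} [AddCommGroup W] [Module R W] [AddCommGroup W']
  [Module R W'] {I J A B : Finset ι} {i₀ : ι} {f g : (∀ i, G i) → W} {h : (∀ i, G i) → R}

/-- The linear map obtained from `f` by fixing all coordinates but one. -/
@[simps]
def toLinearMap (hf : IsMultilinearOn R I f) {i : ι} (hi : i ∈ I) (x : ∀ i, G i) :
    G i →ₗ[R] W where
  toFun a := f (update x i a)
  map_add' := hf.map_update_add i hi x
  map_smul' := hf.map_update_smul i hi x

protected theorem zero : IsMultilinearOn R I fun _ : ∀ i, G i => (0 : W) :=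
  ⟨by simp, by simp, by simp⟩

protected theorem add (hf : IsMultilinearOn R I f) (hg : IsMultilinearOn R I g) :
    IsMultilinearOn R I fun x => f x + g x where
  map_update_add i hi x a b := by
    rw [hf.map_update_add i hi, hg.map_update_add i hi, add_add_add_comm]
  map_update_smul i hi x c a := by
    rw [hf.map_update_smul i hi, hg.map_update_smul i hi, smul_add]
  map_update_of_notMem i hi x a := by
    rw [hf.map_update_of_notMem i hi, hg.map_update_of_notMem i hi]

theorem comp_linearMap (hf : IsMultilinearOn R I f) (φ : W →ₗ[R] W') :
    IsMultilinearOn R I fun x => φ (f x) where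
  map_update_add i hi x a b := by rw [hf.map_update_add i hi, map_add]
  map_update_smul i hi x c a := by rw [hf.map_update_smul i hi, map_smul]
  map_update_of_notMem i hi x a := by rw [hf.map_update_of_notMem i hi]

theorem const_smul (hf : IsMultilinearOn R I f) (c : R) : IsMultilinearOn R I fun x => c • f x :=
  hf.comp_linearMap (LinearMap.lsmul R W c)

protected theorem sub (hf : IsMultilinearOn R I f) (hg : IsMultilinearOn R I g) :
    IsMultilinearOn R I fun x => f x - g x := by
  simpa only [neg_one_smul, ← sub_eq_add_neg] using hf.add (hg.const_smul (-1))

protected theorem sum {κ : Type*} (s : Finset κ) {f : κ → (∀ i, G i) → W}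
    (hf : ∀ k ∈ s, IsMultilinearOn R I (f k)) : IsMultilinearOn R I fun x => ∑ k ∈ s, f k x := by
  classical
  induction s using Finset.induction_on with
  | empty => simpa only [sum_empty] using IsMultilinearOn.zero
  | insert k s hk ih =>
    simp only [sum_insert hk]
    exact (hf k (mem_insert_self k s)).add (ih fun l hl => hf l (mem_insert_of_mem hl))

protected theorem smul (hh : IsMultilinearOn R A h) (hf : IsMultilinearOn R B f)
    (hAB : Disjoint A B) : IsMultilinearOn R (A ∪ B) fun x => h x • f x where
  map_update_add i hi x a b := by
    rcases mem_union.mp hi with hi | hi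
    · have hB := disjoint_left.mp hAB hi
      simp only [hh.map_update_add i hi, hf.map_update_of_notMem i hB, add_smul]
    · have hA := disjoint_right.mp hAB hi
      simp only [hf.map_update_add i hi, hh.map_update_of_notMem i hA, smul_add]
  map_update_smul i hi x c a := by
    rcases mem_union.mp hi with hi | hi
    · have hB := disjoint_left.mp hAB hi
      simp only [hh.map_update_smul i hi, hf.map_update_of_notMem i hB, smul_assoc]
    · have hA := disjoint_right.mp hAB hi
      rw [hf.map_update_smul i hi, hh.map_update_of_notMem i hA, hh.map_update_of_notMem i hA,
        smul_comm]
  map_update_of_notMem i hi x a := by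
    rw [mem_union, not_or] at hi
    rw [hh.map_update_of_notMem i hi.1, hf.map_update_of_notMem i hi.2]

protected theorem prod {κ : Type*} (s : Finset κ) {T : κ → Finset ι} {h : κ → (∀ i, G i) → R}
    (hh : ∀ k ∈ s, IsMultilinearOn R (T k) (h k)) (hT : (s : Set κ).PairwiseDisjoint T) :
    IsMultilinearOn R (s.biUnion T) fun x => ∏ k ∈ s, h k x := by
  classical
  induction s using Finset.induction_on with
  | empty => exact ⟨by simp, by simp, by simp⟩
  | insert k s hk ih =>
    simp only [prod_insert hk, biUnion_insert]
    rw [coe_insert, Set.pairwiseDisjoint_insert_of_notMem hk] at hT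
    exact (hh k (mem_insert_self k s)).smul (ih (fun l hl => hh l (mem_insert_of_mem hl)) hT.1)
      ((disjoint_biUnion_right _ _ _).mpr hT.2)

theorem eq_of_forall_mem_eq [Finite ι] (hf : IsMultilinearOn R I f) {x y : ∀ i, G i}
    (hxy : ∀ i ∈ I, x i = y i) : f x = f y := by
  have := Fintype.ofFinite ι
  have hoff : ∀ K : Finset ι, Disjoint K I → f (K.piecewise x y) = f y := by
    intro K
    induction K using Finset.induction_on with
    | empty => simp
    | insert i K _ ih =>
      intro hK
      rw [disjoint_insert_left] at hK
      rw [piecewise_insert, hf.map_update_of_notMem i hK.1, ih hK.2]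
  rw [← hoff Iᶜ disjoint_compl_left]
  congr 1
  funext i
  by_cases hi : i ∈ I <;> simp [hi, hxy]

theorem map_eq_zero (hf : IsMultilinearOn R I f) {i : ι} (hi : i ∈ I) {x : ∀ i, G i}
    (hx : x i = 0) : f x = 0 := by
  rw [← update_eq_self i x, hx]
  exact (hf.toLinearMap hi x).map_zero

theorem slice (hf : IsMultilinearOn R (insert i₀ J) f) (hi₀ : i₀ ∉ J) (u : G i₀) :
    IsMultilinearOn R J fun x => f (update x i₀ u) where
  map_update_add i hi x a b := by
    have hne : i ≠ i₀ := ne_of_mem_of_not_mem hi hi₀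
    simp only [update_comm hne, hf.map_update_add i (mem_insert_of_mem hi)]
  map_update_smul i hi x c a := by
    have hne : i ≠ i₀ := ne_of_mem_of_not_mem hi hi₀
    simp only [update_comm hne, hf.map_update_smul i (mem_insert_of_mem hi)]
  map_update_of_notMem i hi x a := by
    rcases eq_or_ne i i₀ with rfl | hne
    · rw [update_idem]
    · rw [update_comm hne, hf.map_update_of_notMem i (by simp [hne, hi])]

theorem curry (hf : IsMultilinearOn R (insert i₀ J) f) (hi₀ : i₀ ∉ J) :
    IsMultilinearOn R J (hf.toLinearMap (mem_insert_self i₀ J)) where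
  map_update_add i hi x a b := LinearMap.ext fun u => (hf.slice hi₀ u).map_update_add i hi x a b
  map_update_smul i hi x c a := LinearMap.ext fun u => (hf.slice hi₀ u).map_update_smul i hi x c a
  map_update_of_notMem i hi x a :=
    LinearMap.ext fun u => (hf.slice hi₀ u).map_update_of_notMem i hi x a

theorem uncurry {C : (∀ i, G i) → G i₀ →ₗ[R] W} (hC : IsMultilinearOn R J C) (hi₀ : i₀ ∉ J) :
    IsMultilinearOn R (insert i₀ J) fun x => C x (x i₀) where
  map_update_add i hi x a b := by
    rcases mem_insert.mp hi with rfl | hi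
    · simp only [hC.map_update_of_notMem i hi₀, update_self, map_add]
    · have hne : i₀ ≠ i := (ne_of_mem_of_not_mem hi hi₀).symm
      simp only [hC.map_update_add i hi, update_of_ne hne, LinearMap.add_apply]
  map_update_smul i hi x c a := by
    rcases mem_insert.mp hi with rfl | hi
    · simp only [hC.map_update_of_notMem i hi₀, update_self, map_smul]
    · have hne : i₀ ≠ i := (ne_of_mem_of_not_mem hi hi₀).symm
      simp only [hC.map_update_smul i hi, update_of_ne hne, LinearMap.smul_apply]
  map_update_of_notMem i hi x a := by
    rw [mem_insert, not_or] at hi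
    rw [hC.map_update_of_notMem i hi.2, update_of_ne (Ne.symm hi.1)]

theorem map_sum_finset {γ : Type*} (hf : IsMultilinearOn R I f) (hJ : J ⊆ I)
    (S : J → Finset γ) (Y : γ → ∀ i, G i) (z : ∀ i, G i) :
    f (fun i => if h : i ∈ J then ∑ a ∈ S ⟨i, h⟩, Y a i else z i) =
      ∑ b ∈ Fintype.piFinset S, f fun i => if h : i ∈ J then Y (b ⟨i, h⟩) i else z i := by
  have hupdate : ∀ [DecidableEq J] (y : ∀ i : J, G i) (i : J) (a : G i),
      (fun j => if h : j ∈ J then update y i a ⟨j, h⟩ else z j) =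
        update (fun j => if h : j ∈ J then y ⟨j, h⟩ else z j) i a := by
    intro _ y i a
    funext j
    rcases eq_or_ne j i with rfl | hj
    · simp
    · have hj' : ∀ h : j ∈ J, (⟨j, h⟩ : J) ≠ i := fun h => Subtype.coe_ne_coe.mp hj
      simp [hj, hj']
  let F : MultilinearMap R (fun i : J => G i) W :=
    { toFun := fun y => f fun i => if h : i ∈ J then y ⟨i, h⟩ else z i
      map_update_add' := fun y i a b => by simp only [hupdate, hf.map_update_add i (hJ i.2)]
      map_update_smul' := fun y i c a => by simp only [hupdate, hf.map_update_smul i (hJ i.2)] }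
  exact F.map_sum_finset (fun i a => Y a i) S

end IsMultilinearOn

section Density

variable {F ι : Type*} [Field F] [DecidableEq ι] {G : ι → Type*}
  [∀ i, AddCommGroup (G i)] [∀ i, Module F (G i)] [∀ i, Finite (G i)] {J : Finset ι}
  {σ : Type*} {A : σ → Finset ι} {h : σ → (∀ i, G i) → F}

theorem card_le_ncard_update_forall_eq_zero [Finite F] [Finite σ]
    (hh : ∀ j, IsMultilinearOn F (A j) (h j)) {x : ∀ i, G i} (hx : ∀ j, h j x = 0) (i : ι) :
    Nat.card (G i) ≤ {u | ∀ j, h j (update x i u) = 0}.ncard * Nat.card F ^ Nat.card σ := by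
  let l : σ → G i →ₗ[F] F := fun j => if hj : i ∈ A j then (hh j).toLinearMap hj x else 0
  refine (card_le_ncard_forall_eq_zero_mul l).trans ?_
  gcongr ?_ * _
  refine Set.ncard_le_ncard fun u hu j => ?_
  by_cases hj : i ∈ A j
  · simpa [l, hj] using hu j
  · rw [(hh j).map_update_of_notMem i hj, hx j]

theorem card_le_ncard_forall_eq_zero_of_isMultilinearOn [Finite F] [Finite σ] [Finite ι]
    (hh : ∀ j, IsMultilinearOn F (A j) (h j)) (hA : ∀ j, A j ⊆ J) {x : ∀ i, G i}
    (hx : ∀ j, h j x = 0) :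
    Nat.card (∀ i, G i) ≤
      {z | ∀ j, h j z = 0}.ncard * (Nat.card F ^ Nat.card σ) ^ #J := by
  have hJ : ∀ j z, h j (J.piecewise z x) = h j z := fun j z =>
    (hh j).eq_of_forall_mem_eq fun i hi => piecewise_eq_of_mem J z x (hA j hi)
  simpa only [hJ] using card_le_ncard_piecewise_mul_pow (K := J) (P := fun _ z => ∀ j, h j z = 0)
    (fun _ _ hy i _ => card_le_ncard_update_forall_eq_zero hh hy i) hx

section Rank

variable {U W : Type*} [AddCommGroup U] [Module F U] [Finite U] [AddCommGroup W] [Module F W]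
  {L : (∀ i, G i) → U →ₗ[F] W}

/-- For every `u`, one of `L (update x i u)` and `L (update x i (x i - u))` has rank more than `c`,
because these two linear maps add up to `L x`. -/
theorem card_le_ncard_update_lt_finrank [Finite F] [Finite σ] (hL : IsMultilinearOn F J L)
    (hh : ∀ j, IsMultilinearOn F (A j) (h j)) {c : ℕ} {x : ∀ i, G i} (hx : ∀ j, h j x = 0)
    (hc : 2 * c < finrank F (L x).range) {i : ι} (hi : i ∈ J) :
    Nat.card (G i) ≤ {u | (∀ j, h j (update x i u) = 0) ∧
      c < finrank F (L (update x i u)).range}.ncard * (2 * Nat.card F ^ Nat.card σ) := by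
  set good : Set (G i) := {u | (∀ j, h j (update x i u) = 0) ∧
    c < finrank F (L (update x i u)).range} with hgood
  have hzero_sub : ∀ u, (∀ j, h j (update x i u) = 0) → ∀ j, h j (update x i (x i - u)) = 0 := by
    intro u hu j
    by_cases hj : i ∈ A j
    · simpa [hx j, hu j] using ((hh j).toLinearMap hj x).map_sub (x i) u
    · rw [(hh j).map_update_of_notMem i hj, hx j]
  have hsub : {u | ∀ j, h j (update x i u) = 0} ⊆ good ∪ (x i - ·) ⁻¹' good := by
    intro u hu
    by_contra hcon
    simp only [hgood, Set.mem_union, Set.mem_preimage, Set.mem_ofPred_eq, not_or, not_and,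
      not_lt] at hcon
    have hadd : L x = L (update x i u) + L (update x i (x i - u)) := by
      rw [← hL.map_update_add i hi, add_sub_cancel, update_eq_self]
    have hle := finrank_range_add_le (L (update x i u)) (L (update x i (x i - u)))
    rw [← hadd] at hle
    have := hcon.1 hu
    have := hcon.2 (hzero_sub u hu)
    omega
  have hpre : ((x i - ·) ⁻¹' good).ncard ≤ good.ncard :=
    Set.ncard_le_ncard_of_injOn _ (fun _ hu => hu) sub_right_injective.injOn
  calc Nat.card (G i)
      ≤ {u | ∀ j, h j (update x i u) = 0}.ncard * Nat.card F ^ Nat.card σ :=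
        card_le_ncard_update_forall_eq_zero hh hx i
    _ ≤ (2 * good.ncard) * Nat.card F ^ Nat.card σ := by
        gcongr
        have := (Set.ncard_le_ncard hsub).trans (Set.ncard_union_le _ _)
        omega
    _ = good.ncard * (2 * Nat.card F ^ Nat.card σ) := by ring

theorem card_le_ncard_lt_finrank [Finite F] [Finite σ] [Finite ι] (hL : IsMultilinearOn F J L)
    (hh : ∀ j, IsMultilinearOn F (A j) (h j)) (hA : ∀ j, A j ⊆ J) {c : ℕ} {x : ∀ i, G i}
    (hx : ∀ j, h j x = 0) (hc : 2 ^ #J * c < finrank F (L x).range) :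
    Nat.card (∀ i, G i) ≤ {z | (∀ j, h j z = 0) ∧ c < finrank F (L z).range}.ncard *
      (2 * Nat.card F ^ Nat.card σ) ^ #J := by
  have hJ : ∀ j z, h j (J.piecewise z x) = h j z := fun j z =>
    (hh j).eq_of_forall_mem_eq fun i hi => piecewise_eq_of_mem J z x (hA j hi)
  have hrank : ∀ z, finrank F (L (J.piecewise z x)).range = finrank F (L z).range := fun z => by
    rw [hL.eq_of_forall_mem_eq fun i hi => piecewise_eq_of_mem J z x hi]
  simpa only [hJ, hrank, pow_zero, one_mul] using card_le_ncard_piecewise_mul_pow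
    (P := fun n z => (∀ j, h j z = 0) ∧ 2 ^ n * c < finrank F (L z).range)
    (fun n y hy i hi => card_le_ncard_update_lt_finrank hL hh hy.1
      (by rw [← mul_assoc, ← pow_succ']; exact hy.2) hi) ⟨hx, hc⟩

end Rank

end Density

section PartitionRank

/-- `f` has partition rank at most `N` on the coordinates in `I`: it is a sum of at most `N`
products `h • C`, where for some nonempty `A ⊆ I` the scalar map `h` is multilinear on `A` and `C`
is multilinear on `I \ A`. For vector-valued `f` it is essential that `A = I` is allowed. -/
def HasPartitionRankLE (R : Type*) [CommRing R] {ι : Type*} [DecidableEq ι] {G : ι → Type*}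
    [∀ i, AddCommGroup (G i)] [∀ i, Module R (G i)] {W : Type*} [AddCommGroup W] [Module R W]
    (I : Finset ι) (f : (∀ i, G i) → W) (N : ℕ) : Prop :=
  ∃ n ≤ N, ∃ (A : Fin n → Finset ι) (h : Fin n → (∀ i, G i) → R) (C : Fin n → (∀ i, G i) → W),
    (∀ j, A j ⊆ I ∧ (A j).Nonempty) ∧ (∀ j, IsMultilinearOn R (A j) (h j)) ∧
      (∀ j, IsMultilinearOn R (I \ A j) (C j)) ∧ ∀ x, f x = ∑ j, h j x • C j x

namespace HasPartitionRankLE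

variable {R ι : Type*} [CommRing R] [DecidableEq ι] {G : ι → Type*} [∀ i, AddCommGroup (G i)]
  [∀ i, Module R (G i)] {W : Type*} [AddCommGroup W] [Module R W] {I J : Finset ι} {i₀ : ι}
  {f g : (∀ i, G i) → W} {M N : ℕ}

theorem of_fintype {σ : Type*} [Fintype σ] (hσ : Fintype.card σ ≤ N) {A : σ → Finset ι}
    {h : σ → (∀ i, G i) → R} {C : σ → (∀ i, G i) → W} (hA : ∀ j, A j ⊆ I ∧ (A j).Nonempty)
    (hh : ∀ j, IsMultilinearOn R (A j) (h j)) (hC : ∀ j, IsMultilinearOn R (I \ A j) (C j))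
    (hf : ∀ x, f x = ∑ j, h j x • C j x) : HasPartitionRankLE R I f N := by
  let e := (Fintype.equivFin σ).symm
  exact ⟨_, hσ, A ∘ e, h ∘ e, C ∘ e, fun j => hA (e j), fun j => hh (e j), fun j => hC (e j),
    fun x => (hf x).trans (e.sum_comp fun j => h j x • C j x).symm⟩

theorem zero : HasPartitionRankLE R I (fun _ : ∀ i, G i => (0 : W)) N :=
  of_fintype (σ := Empty) (Nat.zero_le N) (A := nofun) (h := nofun) (C := nofun) nofun nofun nofun
    (by simp)

theorem add (hf : HasPartitionRankLE R I f M) (hg : HasPartitionRankLE R I g N) :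
    HasPartitionRankLE R I (fun x => f x + g x) (M + N) := by
  obtain ⟨m, hm, A, h, C, hA, hh, hC, hfe⟩ := hf
  obtain ⟨n, hn, A', h', C', hA', hh', hC', hge⟩ := hg
  refine of_fintype (σ := Fin m ⊕ Fin n) (by simpa using add_le_add hm hn) (A := Sum.elim A A')
    (h := Sum.elim h h') (C := Sum.elim C C') (Sum.forall.mpr ⟨hA, hA'⟩) (Sum.forall.mpr ⟨hh, hh'⟩)
    (Sum.forall.mpr ⟨hC, hC'⟩) fun x => ?_
  rw [hfe, hge, Fintype.sum_sum_type]
  rfl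

theorem mono (hf : HasPartitionRankLE R I f M) (hMN : M ≤ N) : HasPartitionRankLE R I f N := by
  obtain ⟨n, hn, hfn⟩ := hf
  exact ⟨n, hn.trans hMN, hfn⟩

theorem isMultilinearOn (hf : HasPartitionRankLE R I f N) : IsMultilinearOn R I f := by
  obtain ⟨n, -, A, h, C, hA, hh, hC, hfe⟩ := hf
  rw [funext hfe]
  refine IsMultilinearOn.sum _ fun j _ => ?_
  simpa only [union_sdiff_of_subset (hA j).1] using (hh j).smul (hC j) disjoint_sdiff

theorem uncurry {L : (∀ i, G i) → G i₀ →ₗ[R] W} (hL : HasPartitionRankLE R J L N)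
    (hi₀ : i₀ ∉ J) : HasPartitionRankLE R (insert i₀ J) (fun x => L x (x i₀)) N := by
  obtain ⟨n, hn, A, h, C, hA, hh, hC, hLe⟩ := hL
  refine ⟨n, hn, A, h, fun j x => C j x (x i₀),
    fun j => ⟨(hA j).1.trans (subset_insert i₀ J), (hA j).2⟩, hh, fun j => ?_, fun x => ?_⟩
  · rw [insert_sdiff_of_notMem J fun hi => hi₀ ((hA j).1 hi)]
    exact (hC j).uncurry fun hi => hi₀ (mem_sdiff.mp hi).1
  · simp only [hLe, LinearMap.sum_apply, LinearMap.smul_apply]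

end HasPartitionRankLE

section RankBound

variable {F U W : Type*} [Field F] [Finite F] [AddCommGroup U] [Module F U] [Finite U]
  [AddCommGroup W] [Module F W]

theorem card_pow_mul_ncard_lt_finrank_and_eq_zero_le (f : U →ₗ[F] W) (c : ℕ) :
    Nat.card F ^ (c + 1) * {u | c < finrank F f.range ∧ f u = 0}.ncard ≤ Nat.card U := by
  by_cases hc : c < finrank F f.range
  · rw [← ncard_ker_mul_card_pow_finrank_range f, mul_comm]
    simp only [hc, true_and]
    gcongr
    · exact Nat.card_pos
    · exact hc
  · simp [hc]

theorem exists_ncard_lt_finrank_mul_lt {Ω : Type*} [Fintype Ω] [Nonempty Ω] {L : Ω → U →ₗ[F] W}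
    {t : ℕ} (hL : Nat.card Ω * Nat.card U ≤ (∑ x, {u | L x u = 0}.ncard) * Nat.card F ^ t)
    (c : ℕ) :
    ∃ u, Nat.card Ω ≤ {x | L x u = 0}.ncard * Nat.card F ^ (t + 1) ∧
      {x | c < finrank F (L x).range ∧ L x u = 0}.ncard * Nat.card F ^ c <
        Nat.card Ω * Nat.card F ^ t := by
  have := Fintype.ofFinite U
  set q := Nat.card F
  have hq2 : 2 ≤ q := Finite.one_lt_card
  have hΩ : 0 < Nat.card Ω := Nat.card_pos
  obtain ⟨u, -, hu⟩ : ∃ u ∈ univ,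
      Nat.card Ω + q ^ (c + 1) * {x | c < finrank F (L x).range ∧ L x u = 0}.ncard ≤
        q ^ (t + 1) * {x | L x u = 0}.ncard := by
    refine exists_le_of_sum_le univ_nonempty ?_
    calc ∑ u, (Nat.card Ω + q ^ (c + 1) * {x | c < finrank F (L x).range ∧ L x u = 0}.ncard)
        = Nat.card Ω * Nat.card U +
          ∑ x, q ^ (c + 1) * {u | c < finrank F (L x).range ∧ L x u = 0}.ncard := by
          rw [sum_add_distrib, ← mul_sum, ← mul_sum, sum_ncard_comm]
          simp [mul_comm]
      _ ≤ Nat.card Ω * Nat.card U + Nat.card Ω * Nat.card U := by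
          gcongr
          simpa using sum_le_card_nsmul univ _ _ fun x _ =>
            card_pow_mul_ncard_lt_finrank_and_eq_zero_le (L x) c
      _ ≤ q * ((∑ x, {u | L x u = 0}.ncard) * q ^ t) := by
          rw [← two_mul]
          gcongr
      _ = ∑ u, q ^ (t + 1) * {x | L x u = 0}.ncard := by
          rw [← mul_sum, sum_ncard_comm]
          ring
  have hle : {x | L x u = 0}.ncard ≤ Nat.card Ω := Set.ncard_le_card _
  refine ⟨u, by rw [mul_comm]; omega, Nat.lt_of_mul_lt_mul_left (a := q) ?_⟩
  calc q * ({x | c < finrank F (L x).range ∧ L x u = 0}.ncard * q ^ c)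
      < Nat.card Ω + q ^ (c + 1) * {x | c < finrank F (L x).range ∧ L x u = 0}.ncard := by
        rw [pow_succ]
        linarith
    _ ≤ q ^ (t + 1) * Nat.card Ω := hu.trans (by gcongr)
    _ = q * (Nat.card Ω * q ^ t) := by ring

variable {ι : Type*} [DecidableEq ι] [Finite ι] {G : ι → Type*} [∀ i, AddCommGroup (G i)]
  [∀ i, Module F (G i)] [∀ i, Finite (G i)] {J : Finset ι}

/-- A slice `x ↦ L x u` with many zeros has bounded partition rank, hence vanishes on a dense
variety `{h = 0}`. If `L` had high rank somewhere on this variety, it would have high rank on a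
dense part of it; but for a suitable choice of `u`, few zeros `x` of the slice have high rank. -/
theorem exists_forall_finrank_range_le [Fintype (∀ i, G i)] {L : (∀ i, G i) → U →ₗ[F] W}
    (hL : IsMultilinearOn F J L) {t N : ℕ}
    (hzero : Nat.card (∀ i, G i) * Nat.card U ≤
      (∑ x, {u | L x u = 0}.ncard) * Nat.card F ^ t)
    (hslice : ∀ u, Nat.card (∀ i, G i) ≤ {x | L x u = 0}.ncard * Nat.card F ^ (t + 1) →
      HasPartitionRankLE F J (fun x => L x u) N) :
    ∃ n ≤ N, ∃ (A : Fin n → Finset ι) (h : Fin n → (∀ i, G i) → F),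
      (∀ j, A j ⊆ J ∧ (A j).Nonempty) ∧ (∀ j, IsMultilinearOn F (A j) (h j)) ∧
      ∀ x, (∀ j, h j x = 0) → finrank F (L x).range ≤ 2 ^ #J * (t + (N + 1) * #J) := by
  set c := t + (N + 1) * #J with hc
  set q := Nat.card F
  have hq2 : 2 ≤ q := Finite.one_lt_card
  obtain ⟨u, hu, hrare⟩ := exists_ncard_lt_finrank_mul_lt hzero c
  obtain ⟨n, hn, A, h, C, hA, hh, -, hLu⟩ := hslice u hu
  refine ⟨n, hn, A, h, hA, hh, fun x hx => ?_⟩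
  by_contra! hrank
  refine hrare.not_ge ?_
  calc Nat.card (∀ i, G i) * q ^ t
      ≤ {z | (∀ j, h j z = 0) ∧ c < finrank F (L z).range}.ncard *
          (2 * q ^ Nat.card (Fin n)) ^ #J * q ^ t := by
        gcongr
        exact card_le_ncard_lt_finrank hL hh (fun j => (hA j).1) hx hrank
    _ ≤ {z | c < finrank F (L z).range ∧ L z u = 0}.ncard * (q * q ^ N) ^ #J * q ^ t := by
        gcongr ?_ * (?_ * q ^ ?_) ^ _ * _
        · refine Set.ncard_le_ncard fun z hz => ⟨hz.2, (hLu z).trans (sum_eq_zero fun j _ => ?_)⟩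
          rw [hz.1 j, zero_smul]
        · omega
        · simpa using hn
    _ = {z | c < finrank F (L z).range ∧ L z u = 0}.ncard * q ^ c := by
        rw [hc, ← pow_succ', ← pow_mul]
        ring

end RankBound

end PartitionRank

section Grid

variable {ι γ γ' : Type*} {G : ι → Type*}

/-- The point whose `i`-th coordinate is that of `Y (o i)`. These points form the grid spanned by
the points `Y a`. -/
def mixedPoint (Y : γ → ∀ i, G i) (o : ι → γ) : ∀ i, G i := fun i => Y (o i) i

theorem mixedPoint_cons_succ {m : ℕ} (x : ∀ i, G i) (Y : Fin m → ∀ i, G i) (o : ι → Fin m) :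
    mixedPoint (Fin.cons x Y : Fin (m + 1) → ∀ i, G i) (fun i => (o i).succ) = mixedPoint Y o :=
  rfl

theorem mixedPoint_cons_zero {m : ℕ} (x : ∀ i, G i) (Y : Fin m → ∀ i, G i) :
    mixedPoint (Fin.cons x Y : Fin (m + 1) → ∀ i, G i) (fun _ => 0) = x :=
  rfl

variable [DecidableEq ι]

/-- The index assignment `ι → γ` given by `b` on `J` and constantly equal to `l` off `J`. -/
def extendIndex (J : Finset ι) (l : γ) (b : J → γ) : ι → γ :=
  fun i => if h : i ∈ J then b ⟨i, h⟩ else l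

theorem comp_extendIndex (g : γ → γ') (J : Finset ι) (l : γ) (b : J → γ) :
    (fun i => g (extendIndex J l b i)) = extendIndex J (g l) fun i => g (b i) := by
  funext i
  unfold extendIndex
  split_ifs <;> rfl

theorem extendIndex_succAbove {m : ℕ} (J : Finset ι) (l : Fin (m + 1)) (a : Fin m)
    (b : J → Fin (m + 1)) (e : J → Fin m) :
    extendIndex J (l.succAbove a) (fun i => (b i).succAbove (e i)) =
      fun i => (extendIndex J l b i).succAbove (extendIndex J a e i) := by
  funext i
  unfold extendIndex
  split_ifs <;> rfl

theorem extendIndex_const (J : Finset ι) (l : γ) : extendIndex J l (fun _ => l) = fun _ => l := by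
  funext i
  unfold extendIndex
  split_ifs <;> rfl

theorem mixedPoint_extendIndex (Y : γ → ∀ i, G i) (J : Finset ι) (l : γ) (b : J → γ) :
    mixedPoint Y (extendIndex J l b) = fun i => if h : i ∈ J then Y (b ⟨i, h⟩) i else Y l i := by
  funext i
  unfold mixedPoint extendIndex
  split_ifs <;> rfl

theorem mixedPoint_cons_update {m : ℕ} (x : ∀ i, G i) (Y : Fin m → ∀ i, G i)
    (o : ι → Fin (m + 1)) (i : ι) (a : G i) :
    mixedPoint (Fin.cons (update x i a) Y : Fin (m + 1) → ∀ i, G i) o =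
      if o i = 0 then update (mixedPoint (Fin.cons x Y : Fin (m + 1) → ∀ i, G i) o) i a
      else mixedPoint (Fin.cons x Y : Fin (m + 1) → ∀ i, G i) o := by
  have hne : ∀ j ≠ i, mixedPoint (Fin.cons (update x i a) Y : Fin (m + 1) → ∀ i, G i) o j =
      mixedPoint (Fin.cons x Y : Fin (m + 1) → ∀ i, G i) o j := by
    intro j hj
    unfold mixedPoint
    cases o j using Fin.cases <;> simp [hj]
  split_ifs with h0 <;> funext j <;> rcases eq_or_ne j i with rfl | hj
  · simp [mixedPoint, h0]
  · rw [hne j hj, update_of_ne hj]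
  · obtain ⟨k, hk⟩ := Fin.exists_succ_eq.mpr h0
    simp [mixedPoint, ← hk]
  · exact hne j hj

variable {R W : Type*} [CommRing R] [∀ i, AddCommGroup (G i)] [∀ i, Module R (G i)]
  [AddCommGroup W] [Module R W] {I J : Finset ι} {f : (∀ i, G i) → W} {m : ℕ}

theorem IsMultilinearOn.comp_mixedPoint_cons (hf : IsMultilinearOn R I f)
    (Y : Fin m → ∀ i, G i) (o : ι → Fin (m + 1)) :
    IsMultilinearOn R {i ∈ I | o i = 0} fun x => f (mixedPoint (Fin.cons x Y) o) where
  map_update_add i hi x a b := by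
    rw [mem_filter] at hi
    simp only [mixedPoint_cons_update, hi.2, if_true, hf.map_update_add i hi.1]
  map_update_smul i hi x c a := by
    rw [mem_filter] at hi
    simp only [mixedPoint_cons_update, hi.2, if_true, hf.map_update_smul i hi.1]
  map_update_of_notMem i hi x a := by
    rw [mixedPoint_cons_update]
    split_ifs with h0
    · exact hf.map_update_of_notMem i (fun hI => hi (mem_filter.mpr ⟨hI, h0⟩)) _ _
    · rfl

/-- Since `ρ i` is a permutation, each coordinate `i` of the argument `x` occurs in exactly one
factor if `c i ≠ 0`, and in no factor if `c i = 0`. -/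
theorem IsMultilinearOn.prod_comp_mixedPoint_succAbove (hf : IsMultilinearOn R I f)
    (w : Fin m → W →ₗ[R] R) (Y : Fin m → ∀ i, G i) (c : ι → Fin (m + 1))
    (ρ : ι → Equiv.Perm (Fin m)) :
    IsMultilinearOn R {i ∈ I | c i ≠ 0} fun x =>
      ∏ a, w a (f (mixedPoint (Fin.cons x Y) fun i => (c i).succAbove (ρ i a))) := by
  have hfactor : ∀ a ∈ univ, IsMultilinearOn R {i ∈ I | (c i).succAbove (ρ i a) = 0}
      fun x => w a (f (mixedPoint (Fin.cons x Y) fun i => (c i).succAbove (ρ i a))) :=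
    fun a _ => (hf.comp_mixedPoint_cons Y _).comp_linearMap (w a)
  convert IsMultilinearOn.prod univ hfactor fun a _ b _ hab => ?_ using 1
  · ext i
    simp only [mem_filter, mem_biUnion, mem_univ, true_and, exists_and_left, and_congr_right_iff]
    intro _
    rw [← (ρ i).surjective.exists (p := fun a => (c i).succAbove a = 0)]
    refine ⟨fun hc => Fin.exists_succAbove_eq hc.symm, ?_⟩
    rintro ⟨a, ha⟩ hc
    exact Fin.succAbove_ne (c i) a (ha.trans hc.symm)
  · refine disjoint_left.mpr fun i ha hb => hab ((ρ i).injective ?_)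
    exact Fin.succAbove_right_injective ((mem_filter.mp ha).2.trans (mem_filter.mp hb).2.symm)

variable [Finite ι]

theorem IsMultilinearOn.map_sum_eq_zero_of_mixedPoint (hf : IsMultilinearOn R I f)
    (hI : I.Nonempty) (hIJ : I ⊆ J) {Y : γ → ∀ i, G i} (hY : ∀ o, f (mixedPoint Y o) = 0)
    (S : J → Finset γ) :
    f (fun i => if h : i ∈ J then ∑ a ∈ S ⟨i, h⟩, Y a i else 0) = 0 := by
  rw [hf.eq_of_forall_mem_eq (y := fun i => if h : i ∈ I then
    ∑ a ∈ S ⟨i, hIJ h⟩, Y a i else 0) fun i hi => by simp [hi, hIJ hi],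
    hf.map_sum_finset subset_rfl (fun i : I => S ⟨i, hIJ i.2⟩)]
  refine sum_eq_zero fun b _ => ?_
  obtain ⟨i₁, hi₁⟩ := hI
  rw [← hY (extendIndex I (b ⟨i₁, hi₁⟩) b)]
  exact hf.eq_of_forall_mem_eq fun i hi => by simp [mixedPoint, extendIndex, hi]

end Grid

section GridDeterminant

variable {F ι W : Type*} [Field F] [DecidableEq ι] {G : ι → Type*} [AddCommGroup W]
  [Module F W] {J : Finset ι}

/-- The polarised determinant of the matrices `(w j (f z))_{j, l}`, where `z` runs through the
points of the grid spanned by `Y` having `Y l` as their coordinates off `J`. In the application,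
`f` is multilinear on `insert i₀ J` and the coordinates in `J` of `z` are indexed by `b`. -/
def gridDet {γ : Type*} [Fintype γ] [DecidableEq γ] (J : Finset ι) (f : (∀ i, G i) → W)
    (Y : γ → ∀ i, G i) (w : γ → W →ₗ[F] F) : F :=
  polarizedDet fun j l (b : J → γ) => w j (f (mixedPoint Y (extendIndex J l b)))

/-- The coefficient of `f (mixedPoint (Fin.cons x Y) (extendIndex J l b))` in the expansion of the
polarised determinant of order `m + 1` for the points `x, Y 0, …, Y (m - 1)`. -/
def gridCofactor {m : ℕ} (J : Finset ι) (f : (∀ i, G i) → W) (Y : Fin m → ∀ i, G i)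
    (w : Fin m → W →ₗ[F] F) (l : Fin (m + 1)) (b : J → Fin (m + 1)) (x : ∀ i, G i) : F :=
  polarizedCofactor (fun j l (b : J → Fin (m + 1)) =>
    w j (f (mixedPoint (Fin.cons x Y) (extendIndex J l b)))) l b

theorem gridDet_cons {m : ℕ} (f : (∀ i, G i) → W) (Y : Fin m → ∀ i, G i) (w : Fin m → W →ₗ[F] F)
    (x : ∀ i, G i) (w₀ : W →ₗ[F] F) :
    gridDet J f (Fin.cons x Y : Fin (m + 1) → ∀ i, G i) (Fin.cons w₀ w : Fin (m + 1) → _) =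
      w₀ (∑ l, ∑ b, gridCofactor J f Y w l b x •
        f (mixedPoint (Fin.cons x Y) (extendIndex J l b))) := by
  simp only [gridDet, polarizedDet_succ, Fin.cons_zero, Fin.cons_succ, map_sum, map_smul,
    smul_eq_mul, mul_comm (w₀ _)]
  rfl

theorem gridCofactor_zero {m : ℕ} (f : (∀ i, G i) → W) (Y : Fin m → ∀ i, G i)
    (w : Fin m → W →ₗ[F] F) (x : ∀ i, G i) :
    gridCofactor J f Y w 0 0 x = gridDet J f Y w := by
  simp only [gridCofactor, polarizedCofactor_zero, gridDet, ← comp_extendIndex,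
    mixedPoint_cons_succ]

/-- The sum of all terms but `(0, 0)` in the expansion of a polarised determinant of order `m + 1`
for the points `x, Y 0, …, Y (m - 1)`, divided by minus the coefficient of the term `(0, 0)`, which
is `f x`. If all these determinants vanish, then `f x` equals this remainder. -/
def gridRemainder {m : ℕ} (J : Finset ι) (f : (∀ i, G i) → W) (Y : Fin m → ∀ i, G i)
    (w : Fin m → W →ₗ[F] F) (x : ∀ i, G i) : W :=
  ∑ p : {p : Fin (m + 1) × (J → Fin (m + 1)) // p ≠ 0},
    (-(gridDet J f Y w)⁻¹ • gridCofactor J f Y w p.1.1 p.1.2 x) •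
      f (mixedPoint (Fin.cons x Y) (extendIndex J p.1.1 p.1.2))

theorem eq_gridRemainder {m : ℕ} {f : (∀ i, G i) → W} {Y : Fin m → ∀ i, G i}
    {w : Fin m → W →ₗ[F] F} (hne : gridDet J f Y w ≠ 0) {x : ∀ i, G i}
    (hx : ∀ w₀, gridDet J f (Fin.cons x Y : Fin (m + 1) → ∀ i, G i)
      (Fin.cons w₀ w : Fin (m + 1) → _) = 0) :
    f x = gridRemainder J f Y w x := by
  have hsum : ∑ l, ∑ b, gridCofactor J f Y w l b x •
      f (mixedPoint (Fin.cons x Y) (extendIndex J l b)) = 0 := by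
    rw [← Module.forall_dual_apply_eq_zero_iff F]
    exact fun w₀ => (gridDet_cons f Y w x w₀).symm.trans (hx w₀)
  rw [← Fintype.sum_prod_type', Fintype.sum_eq_add_sum_subtype_ne _ 0] at hsum
  simp only [Prod.fst_zero, Prod.snd_zero, gridCofactor_zero] at hsum
  simp only [Pi.zero_def, extendIndex_const, mixedPoint_cons_zero] at hsum
  simp only [gridRemainder, smul_assoc, ← smul_sum]
  rw [← neg_eq_of_add_eq_zero_right hsum, smul_neg, neg_smul, neg_neg, inv_smul_smul₀ hne]

variable [∀ i, AddCommGroup (G i)] [∀ i, Module F (G i)] {I : Finset ι} {i₀ : ι}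

theorem gridDet_eq_zero_of_finrank_range_lt [Finite ι] [Finite (G i₀)] {γ σ : Type*} [Fintype γ]
    [DecidableEq γ] {f : (∀ i, G i) → W} (hf : IsMultilinearOn F (insert i₀ J) f)
    {A : σ → Finset ι} {h : σ → (∀ i, G i) → F} (hA : ∀ j, A j ⊆ J ∧ (A j).Nonempty)
    (hh : ∀ j, IsMultilinearOn F (A j) (h j)) (hrank : ∀ x, (∀ j, h j x = 0) →
      finrank F (hf.toLinearMap (mem_insert_self i₀ J) x).range < Fintype.card γ)
    {Y : γ → ∀ i, G i} (hY : ∀ j o, h j (mixedPoint Y o) = 0) (w : γ → W →ₗ[F] F) (hi₀ : i₀ ∉ J) :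
    gridDet J f Y w = 0 := by
  refine polarizedDet_eq_zero_of_forall_det_sum_eq_zero _ fun S => ?_
  let z : ∀ i, G i := fun i => if h : i ∈ J then ∑ a ∈ S ⟨i, h⟩, Y a i else 0
  have hz : ∀ j, h j z = 0 := fun j =>
    (hh j).map_sum_eq_zero_of_mixedPoint (hA j).2 (hA j).1 (hY j) S
  rw [← det_eq_zero_of_finrank_range_lt _ (hrank z hz) (fun l => Y l i₀) w]
  congr 2
  funext j l
  rw [← map_sum]
  simp only [mixedPoint_extendIndex]
  congr 1
  refine (hf.map_sum_finset (subset_insert i₀ J) S Y (Y l)).symm.trans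
    (hf.eq_of_forall_mem_eq fun i hi => ?_)
  rcases mem_insert.mp hi with rfl | hi
  · simp [hi₀]
  · simp [z, hi, ne_of_mem_of_not_mem hi hi₀]

theorem exists_maximal_gridDet_ne_zero [Finite ι] [Finite (G i₀)] {σ : Type*}
    {f : (∀ i, G i) → W} (hf : IsMultilinearOn F (insert i₀ J) f) (hi₀ : i₀ ∉ J)
    {A : σ → Finset ι} {h : σ → (∀ i, G i) → F} (hA : ∀ j, A j ⊆ J ∧ (A j).Nonempty)
    (hh : ∀ j, IsMultilinearOn F (A j) (h j)) {n : ℕ} (hrank : ∀ x, (∀ j, h j x = 0) →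
      finrank F (hf.toLinearMap (mem_insert_self i₀ J) x).range < n) :
    ∃ m < n, ∃ (Y : Fin m → ∀ i, G i) (w : Fin m → W →ₗ[F] F),
      (∀ j o, h j (mixedPoint Y o) = 0) ∧ gridDet J f Y w ≠ 0 ∧
      ∀ (Y' : Fin (m + 1) → ∀ i, G i) (w' : Fin (m + 1) → W →ₗ[F] F),
        (∀ j o, h j (mixedPoint Y' o) = 0) → gridDet J f Y' w' = 0 := by
  let vanishes (m : ℕ) : Prop := ∀ (Y : Fin m → ∀ i, G i) (w : Fin m → W →ₗ[F] F),
    (∀ j o, h j (mixedPoint Y o) = 0) → gridDet J f Y w = 0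
  have hn : vanishes n := fun Y w hY =>
    gridDet_eq_zero_of_finrank_range_lt hf hA hh (by simpa using hrank) hY w hi₀
  have h0 : ¬ vanishes 0 := by
    intro h0
    refine one_ne_zero (α := F) ?_
    rw [← h0 Fin.elim0 Fin.elim0 fun j o => (o (hA j).2.choose).elim0]
    simp [gridDet, polarizedDet]
  obtain ⟨m, hm, hm'⟩ : ∃ m, ¬ vanishes m ∧ vanishes (m + 1) ∧ m < n := by
    classical
    have hex : ∃ n, vanishes n := ⟨n, hn⟩
    obtain ⟨m, hm⟩ := Nat.exists_eq_succ_of_ne_zero fun he => h0 (he ▸ Nat.find_spec hex)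
    have hspec := Nat.find_spec hex
    have hmin := Nat.find_min' hex hn
    exact ⟨m, Nat.find_min hex (by omega), by rwa [hm] at hspec, by omega⟩
  simp only [vanishes, not_forall] at hm
  obtain ⟨Y, w, hY, hne⟩ := hm
  exact ⟨m, hm'.2, Y, w, hY, hne, hm'.1⟩

theorem IsMultilinearOn.gridCofactor {f : (∀ i, G i) → W}
    (hf : IsMultilinearOn F I f) {m : ℕ} (Y : Fin m → ∀ i, G i)
    (w : Fin m → W →ₗ[F] F) (l : Fin (m + 1)) (b : J → Fin (m + 1)) :
    IsMultilinearOn F {i ∈ I | extendIndex J l b i ≠ 0} (gridCofactor J f Y w l b) := by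
  unfold _root_.gridCofactor polarizedCofactor
  refine IsMultilinearOn.const_smul (IsMultilinearOn.sum _ fun ε _ => ?_) _
  simp only [Matrix.det_apply', Matrix.of_apply, extendIndex_succAbove]
  refine IsMultilinearOn.sum _ fun σ _ => IsMultilinearOn.const_smul ?_ ((σ.sign : ℤ) : F)
  convert hf.prod_comp_mixedPoint_succAbove (w ∘ σ) Y (extendIndex J l b)
    (fun i => if h : i ∈ J then σ.trans (ε ⟨i, h⟩) else Equiv.refl _) using 7 with x a
  · rfl
  · unfold extendIndex
    split_ifs <;> rfl

theorem IsMultilinearOn.hasPartitionRankLE_gridRemainder {f : (∀ i, G i) → W}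
    (hf : IsMultilinearOn F (insert i₀ J) f) (hi₀ : i₀ ∉ J) {m : ℕ} (Y : Fin m → ∀ i, G i)
    (w : Fin m → W →ₗ[F] F) :
    HasPartitionRankLE F (insert i₀ J) (gridRemainder J f Y w) ((m + 1) ^ (#J + 1)) := by
  refine HasPartitionRankLE.of_fintype
    (σ := {p : Fin (m + 1) × (J → Fin (m + 1)) // p ≠ 0}) ?_ (fun p => ⟨filter_subset _ _, ?_⟩)
    (fun p => (hf.gridCofactor Y w p.1.1 p.1.2).const_smul _) (fun p => ?_) fun _ => rfl
  · refine (Fintype.card_subtype_le _).trans_eq ?_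
    rw [Fintype.card_prod, Fintype.card_fun, Fintype.card_fin, Fintype.card_coe, pow_succ']
  · by_contra hempty
    simp only [not_nonempty_iff_eq_empty, filter_eq_empty_iff, mem_insert, forall_eq_or_imp,
      not_not] at hempty
    refine p.2 (Prod.ext ?_ (funext fun i => ?_))
    · simpa [extendIndex, hi₀] using hempty.1
    · simpa [extendIndex] using hempty.2 i i.2
  · convert hf.comp_mixedPoint_cons Y (extendIndex J p.1.1 p.1.2) using 1
    rw [filter_not, Finset.sdiff_sdiff_eq_self (filter_subset _ _)]

section Dense

variable [Finite ι] {m : ℕ} {Y : Fin m → ∀ i, G i}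

theorem IsMultilinearOn.apply_mixedPoint_cons_zero_eq_zero {f : (∀ i, G i) → W}
    (hf : IsMultilinearOn F I f) (hI : I.Nonempty) (hY : ∀ o, f (mixedPoint Y o) = 0)
    (o : ι → Fin (m + 1)) : f (mixedPoint (Fin.cons 0 Y) o) = 0 := by
  by_cases hzero : ∃ i ∈ I, o i = 0
  · obtain ⟨i, hi, hoi⟩ := hzero
    exact hf.map_eq_zero hi (by simp [mixedPoint, hoi])
  · push Not at hzero
    obtain ⟨i₁, hi₁⟩ := hI
    let o' : ι → Fin m := fun i => if h : o i = 0 then (o i₁).pred (hzero i₁ hi₁) else (o i).pred h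
    rw [← hY o', ← mixedPoint_cons_succ 0 Y o']
    refine hf.eq_of_forall_mem_eq fun i hi => ?_
    simp [mixedPoint, o', hzero i hi]

variable [∀ i, Finite (G i)] {σ : Type*} {A : σ → Finset ι} {h : σ → (∀ i, G i) → F}

theorem card_le_ncard_forall_mixedPoint_cons_eq_zero [Finite F] [Finite σ]
    (hh : ∀ j, IsMultilinearOn F (A j) (h j)) (hA : ∀ j, A j ⊆ J ∧ (A j).Nonempty)
    (hY : ∀ j o, h j (mixedPoint Y o) = 0) :
    Nat.card (∀ i, G i) ≤ {x | ∀ j o, h j (mixedPoint (Fin.cons x Y) o) = 0}.ncard *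
      (Nat.card F ^ (Nat.card σ * (m + 1) ^ #J)) ^ #J := by
  have hforms := card_le_ncard_forall_eq_zero_of_isMultilinearOn (J := J)
    (fun p : σ × (J → Fin (m + 1)) => (hh p.1).comp_mixedPoint_cons Y (extendIndex J 0 p.2))
    (fun p => (filter_subset _ _).trans (hA p.1).1)
    fun p => (hh p.1).apply_mixedPoint_cons_zero_eq_zero (hA p.1).2 (hY p.1) _
  rw [Nat.card_prod, Nat.card_fun, Nat.card_fin, Nat.card_eq_finsetCard] at hforms
  refine hforms.trans ?_
  gcongr ?_ * _
  refine Set.ncard_le_ncard fun x hx j o => ?_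
  rw [← hx (j, fun i => o i)]
  refine (hh j).eq_of_forall_mem_eq fun i hi => ?_
  simp [mixedPoint, extendIndex, (hA j).1 hi]

/-- Bounded rank on a variety `{h = 0}` makes `f` agree with a map of bounded partition rank on a
large set: take a nonzero polarised determinant of maximal order and solve the expansions of those
of the next order for `f`. -/
theorem IsMultilinearOn.exists_hasPartitionRankLE_of_finrank_lt [Finite F] [Finite σ]
    {f : (∀ i, G i) → W} (hf : IsMultilinearOn F (insert i₀ J) f) (hi₀ : i₀ ∉ J)
    (hA : ∀ j, A j ⊆ J ∧ (A j).Nonempty) (hh : ∀ j, IsMultilinearOn F (A j) (h j)) {n : ℕ}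
    (hrank : ∀ x, (∀ j, h j x = 0) →
      finrank F (hf.toLinearMap (mem_insert_self i₀ J) x).range < n) :
    ∃ g, HasPartitionRankLE F (insert i₀ J) g (n ^ (#J + 1)) ∧
      Nat.card (∀ i, G i) ≤ {x | ∀ u, f (update x i₀ u) = g (update x i₀ u)}.ncard *
        (Nat.card F ^ (Nat.card σ * n ^ #J)) ^ #J := by
  obtain ⟨m, hmn, Y, w, hY, hne, hmax⟩ := exists_maximal_gridDet_ne_zero hf hi₀ hA hh hrank
  refine ⟨gridRemainder J f Y w, (hf.hasPartitionRankLE_gridRemainder hi₀ Y w).mono ?_,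
    (card_le_ncard_forall_mixedPoint_cons_eq_zero hh hA hY).trans
      (Nat.mul_le_mul (Set.ncard_le_ncard fun x hx u => ?_) ?_)⟩
  · gcongr
    exact hmn
  · refine eq_gridRemainder hne fun w₀ => hmax _ _ fun j o => ?_
    rw [← hx j o]
    exact ((hh j).comp_mixedPoint_cons Y o).map_update_of_notMem i₀
      (fun hi => hi₀ ((hA j).1 (mem_filter.mp hi).1)) x u
  · gcongr
    · exact Nat.card_pos
    · exact hmn

end Dense

end GridDeterminant

theorem IsMultilinearOn.hasPartitionRankLE_insert {F ι W : Type*} [Field F] [Finite F]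
    [DecidableEq ι] [Finite ι] {G : ι → Type*} [∀ i, AddCommGroup (G i)] [∀ i, Module F (G i)]
    [∀ i, Finite (G i)] [AddCommGroup W] [Module F W] {i₀ : ι} {J : Finset ι}
    {f : (∀ i, G i) → W} (hf : IsMultilinearOn F (insert i₀ J) f) (hi₀ : i₀ ∉ J) {t s n r : ℕ}
    (hzero : Nat.card (∀ i, G i) ≤ {x | f x = 0}.ncard * Nat.card F ^ t)
    (hslice : ∀ u, Nat.card (∀ i, G i) ≤ {x | f (update x i₀ u) = 0}.ncard * Nat.card F ^ (t + 1) →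
      HasPartitionRankLE F J (fun x => f (update x i₀ u)) s)
    (hn : 2 ^ #J * (t + (s + 1) * #J) < n)
    (hremainder : ∀ L : (∀ i, G i) → G i₀ →ₗ[F] W, IsMultilinearOn F J L →
      Nat.card (∀ i, G i) ≤ {x | L x = 0}.ncard * Nat.card F ^ (s * n ^ #J * #J) →
      HasPartitionRankLE F J L r) :
    HasPartitionRankLE F (insert i₀ J) f (n ^ (#J + 1) + r) := by
  have := Fintype.ofFinite (∀ i, G i)
  have hzeros : Nat.card (∀ i, G i) * Nat.card (G i₀) ≤
      (∑ x, {u | hf.toLinearMap (mem_insert_self i₀ J) x u = 0}.ncard) * Nat.card F ^ t := by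
    simp only [IsMultilinearOn.toLinearMap_apply]
    rw [sum_ncard_update_eq i₀ fun x => f x = 0, mul_comm, mul_assoc]
    gcongr
  obtain ⟨N, hN, A, h, hA, hh, hrank⟩ := exists_forall_finrank_range_le (hf.curry hi₀) hzeros hslice
  obtain ⟨g, hg, hfg⟩ := hf.exists_hasPartitionRankLE_of_finrank_lt hi₀ hA hh
    fun x hx => (hrank x hx).trans_lt hn
  have hsub := hf.sub hg.isMultilinearOn
  have hdense : Nat.card (∀ i, G i) ≤
      {x | hsub.toLinearMap (mem_insert_self i₀ J) x = 0}.ncard *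
        Nat.card F ^ (s * n ^ #J * #J) := by
    refine hfg.trans (Nat.mul_le_mul (Set.ncard_le_ncard fun x hx => ?_) ?_)
    · exact LinearMap.ext fun u => sub_eq_zero.mpr (hx u)
    · rw [← pow_mul, Nat.card_fin]
      gcongr
      exact Nat.card_pos
  have hf_eq : f = fun x => g x + hsub.toLinearMap (mem_insert_self i₀ J) x (x i₀) := by
    funext x
    simp
  rw [hf_eq]
  exact hg.add ((hremainder _ (hsub.curry hi₀) hdense).uncurry hi₀)

universe u v

theorem exists_forall_hasPartitionRankLE (k : ℕ) : ∃ p : ℕ[X],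
    ∀ {F : Type u} {ι : Type v} {G : ι → Type u} {W : Type u} [Field F] [Finite F] [DecidableEq ι]
      [Finite ι] [∀ i, AddCommGroup (G i)] [∀ i, Module F (G i)] [∀ i, Finite (G i)]
      [AddCommGroup W] [Module F W] {I : Finset ι} {f : (∀ i, G i) → W} {t : ℕ},
      #I = k → IsMultilinearOn F I f →
      Nat.card (∀ i, G i) ≤ {x | f x = 0}.ncard * Nat.card F ^ t →
      HasPartitionRankLE F I f (p.eval t) := by
  induction k with
  | zero =>
    refine ⟨0, fun {F ι G W} _ _ _ _ _ _ _ _ _ I f t hI hf hzero => ?_⟩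
    rw [card_eq_zero] at hI
    subst hI
    obtain ⟨x₀, hx₀⟩ : {x | f x = 0}.Nonempty :=
      Set.nonempty_of_ncard_ne_zero (left_ne_zero_of_mul (Nat.card_pos.trans_le hzero).ne')
    have hf0 : f = fun _ => 0 := funext fun x => (hf.eq_of_forall_mem_eq (by simp)).trans hx₀
    rw [hf0]
    exact HasPartitionRankLE.zero
  | succ k ih =>
    obtain ⟨p, ih⟩ := ih
    let s : ℕ[X] := p.comp (X + 1)
    let n : ℕ[X] := C (2 ^ k) * (X + (s + 1) * C k) + 1
    refine ⟨n ^ (k + 1) + p.comp (s * n ^ k * C k),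
      fun {F ι G W} _ _ _ _ _ _ _ _ _ I f t hI hf hzero => ?_⟩
    obtain ⟨i₀, J, hi₀, rfl, rfl⟩ := card_eq_succ.mp hI
    rw [eval_add, eval_pow, eval_comp]
    refine hf.hasPartitionRankLE_insert hi₀ (s := s.eval t) hzero (fun u hu => ?_)
      (by simp [n]) fun L hL hLzero => ih rfl hL (by simpa using hLzero)
    simpa [s] using ih rfl (hf.slice hi₀ u) hu

theorem HasPartitionRankLE.exists_forall_mem_eq_sum_smul {F ι : Type*} [Field F] [DecidableEq ι]
    {G : ι → Type*} [∀ i, AddCommGroup (G i)] [∀ i, Module F (G i)] {W : Type*} [AddCommGroup W]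
    [Module F W] {I : Finset ι} {ν : Type*} [Fintype ν] {φ : ν → (∀ i, G i) → W}
    {P : Set (ν → F)} {s : ℕ}
    (hP : ∀ c ∈ P, HasPartitionRankLE F I (fun x => ∑ i, c i • φ i x) s) :
    ∃ (σ : Type) (_ : Fintype σ) (A : σ → Finset ι) (h : σ → (∀ i, G i) → F)
      (C : σ → (∀ i, G i) → W), Fintype.card σ ≤ Fintype.card ν * s ∧
        (∀ j, A j ⊆ I ∧ (A j).Nonempty) ∧ (∀ j, IsMultilinearOn F (A j) (h j)) ∧
        (∀ j, IsMultilinearOn F (I \ A j) (C j)) ∧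
        ∀ c ∈ P, ∃ a : σ → F, ∀ x, ∑ i, c i • φ i x = ∑ j, a j • h j x • C j x := by
  obtain ⟨b, hbP, hbspan, -⟩ := Submodule.exists_fun_fin_finrank_span_eq F P
  choose n hn A h C hA hh hC hb using fun d => hP (b d) (hbP d)
  refine ⟨Σ d, Fin (n d), inferInstance, fun p => A p.1 p.2, fun p => h p.1 p.2,
    fun p => C p.1 p.2, ?_, fun p => hA p.1 p.2, fun p => hh p.1 p.2, fun p => hC p.1 p.2,
    fun c hc => ?_⟩
  · calc Fintype.card (Σ d, Fin (n d)) = ∑ d, n d := by simp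
      _ ≤ finrank F (Submodule.span F P) * s := by
        simpa using sum_le_card_nsmul univ n s fun d _ => hn d
      _ ≤ Fintype.card ν * s := by
        gcongr
        simpa using (Submodule.span F P).finrank_le
  · have hmem : c ∈ Submodule.span F (Set.range b) := by
      rw [hbspan]
      exact Submodule.subset_span hc
    obtain ⟨a, rfl⟩ := (Submodule.mem_span_range_iff_exists_fun F).mp hmem
    refine ⟨fun p => a p.1, fun x => ?_⟩
    have hlin := map_sum (Fintype.linearCombination F fun i => φ i x) (fun d => a d • b d) univ
    simp only [map_smul, Fintype.linearCombination_apply] at hlin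
    rw [hlin, Fintype.sum_sigma]
    simp only [hb, smul_sum]

section MultilinearComponents

variable {R ι : Type*} [CommRing R] [DecidableEq ι] {G : ι → Type*} [∀ i, AddCommGroup (G i)]
  [∀ i, Module R (G i)] {W : Type*} [AddCommGroup W] [Module R W] {D : Finset (Finset ι)}

/-- `ψ` is a sum of maps which are each multilinear on some `I ∈ D`. For `D = univ`, these are
exactly the multiaffine maps. -/
def HasMultilinearComponents (R : Type*) [CommRing R] {ι : Type*} [DecidableEq ι] {G : ι → Type*}
    [∀ i, AddCommGroup (G i)] [∀ i, Module R (G i)] {W : Type*} [AddCommGroup W] [Module R W]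
    (D : Finset (Finset ι)) (ψ : (∀ i, G i) → W) : Prop :=
  ∃ Φ : Finset ι → (∀ i, G i) → W, (∀ I ∈ D, IsMultilinearOn R I (Φ I)) ∧
    ∀ x, ψ x = ∑ I ∈ D, Φ I x

theorem IsMultilinearOn.hasMultilinearComponents {I : Finset ι} {f : (∀ i, G i) → W}
    (hf : IsMultilinearOn R I f) (hI : I ∈ D) : HasMultilinearComponents R D f := by
  refine ⟨fun K x => if K = I then f x else 0, fun K _ => ?_, fun x => ?_⟩
  · rcases eq_or_ne K I with rfl | hK
    · simpa only [if_true] using hf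
    · simpa only [if_neg hK] using IsMultilinearOn.zero
  · rw [sum_ite_eq' D I, if_pos hI]

theorem ncard_map_add_eq_zero_le {U : Type*} [AddCommGroup U] [Finite U] (L : U →+ W) (w : W) :
    {u | L u + w = 0}.ncard ≤ {u | L u = 0}.ncard := by
  rcases Set.eq_empty_or_nonempty {u | L u + w = 0} with hempty | ⟨u₀, hu₀⟩
  · simp [hempty]
  · refine Set.ncard_le_ncard_of_injOn (· - u₀) (fun u hu => ?_) sub_left_injective.injOn
    rw [Set.mem_ofPred_eq, map_sub, sub_eq_zero]
    exact add_right_cancel (Eq.trans hu hu₀.symm)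

variable [Finite ι] [∀ i, Finite (G i)] {Φ : Finset ι → (∀ i, G i) → W}

theorem ncard_sum_eq_zero_le_ncard_sum_filter_mem (hΦ : ∀ I ∈ D, IsMultilinearOn R I (Φ I))
    (i : ι) :
    {x | ∑ I ∈ D, Φ I x = 0}.ncard ≤ {x | ∑ I ∈ D with i ∈ I, Φ I x = 0}.ncard := by
  suffices 1 * {x | ∑ I ∈ D, Φ I x = 0}.ncard ≤
      1 * {x | ∑ I ∈ D with i ∈ I, Φ I x = 0}.ncard by simpa
  refine mul_ncard_le_mul_ncard_of_update i fun x => ?_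
  let L : G i →ₗ[R] W := ∑ I ∈ {I ∈ D | i ∈ I}.attach,
    (hΦ I.1 (mem_filter.mp I.2).1).toLinearMap (mem_filter.mp I.2).2 x
  have hL : ∀ u, ∑ I ∈ D with i ∈ I, Φ I (update x i u) = L u := fun u => by
    simp only [L, LinearMap.sum_apply, IsMultilinearOn.toLinearMap_apply]
    exact (sum_attach {I ∈ D | i ∈ I} fun I => Φ I (update x i u)).symm
  have hsum : ∀ u, ∑ I ∈ D, Φ I (update x i u) = L u + ∑ I ∈ D with i ∉ I, Φ I x := fun u => by
    rw [← sum_filter_add_sum_filter_not D (i ∈ ·), hL]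
    congr 1
    refine sum_congr rfl fun I hI => ?_
    exact (hΦ I (mem_filter.mp hI).1).map_update_of_notMem i (mem_filter.mp hI).2 x u
  simp only [hsum, hL, one_mul]
  exact ncard_map_add_eq_zero_le L.toAddMonoidHom _

theorem ncard_sum_eq_zero_le_ncard_maximal {I : Finset ι} (hI : Maximal (· ∈ D) I)
    (hΦ : ∀ K ∈ D, IsMultilinearOn R K (Φ K)) :
    {x | ∑ K ∈ D, Φ K x = 0}.ncard ≤ {x | Φ I x = 0}.ncard := by
  have hle : ∀ S : Finset ι,
      {x | ∑ K ∈ D, Φ K x = 0}.ncard ≤ {x | ∑ K ∈ D with S ⊆ K, Φ K x = 0}.ncard := by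
    intro S
    induction S using Finset.induction_on with
    | empty => simp
    | insert i S _ ih =>
      refine ih.trans ((ncard_sum_eq_zero_le_ncard_sum_filter_mem
        (fun K hK => hΦ K (mem_filter.mp hK).1) i).trans_eq ?_)
      simp only [filter_filter, insert_subset_iff, and_comm]
  refine (hle I).trans_eq ?_
  have hfilter : {K ∈ D | I ⊆ K} = {I} := by
    ext K
    rw [mem_filter, mem_singleton]
    exact ⟨fun hK => (hI.eq_of_le hK.1 hK.2).symm, by rintro rfl; exact ⟨hI.prop, subset_rfl⟩⟩
  simp only [hfilter, sum_singleton]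

end MultilinearComponents

/-- Every linear relation between the `ψ i` at the point `x` holds on the whole fibre of `β`
through `x`. -/
def RelationsPersist {R ν σ Ω W : Type*} [CommRing R] [Fintype ν] [AddCommGroup W] [Module R W]
    (ψ : ν → Ω → W) (β : σ → Ω → R) (x : Ω) : Prop :=
  ∀ c : ν → R, ∑ i, c i • ψ i x = 0 → ∀ x', (∀ j, β j x' = β j x) → ∑ i, c i • ψ i x' = 0

/-- At `x` and at every point with the same values of `h`, the combination of the `φ i + top i` with
coefficients `c` agrees with that of the `φ i` and `C j` with coefficients `c` and `a j * h j x`. -/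
theorem RelationsPersist.of_eq_sum_smul {R ν σ τ Ω W : Type*} [CommRing R] [Fintype ν] [Fintype τ]
    [AddCommGroup W] [Module R W] {φ top : ν → Ω → W} {β : σ → Ω → R} {h : τ → Ω → R}
    {C : τ → Ω → W} {x : Ω} (hx : RelationsPersist (Sum.elim φ C) β x)
    (htop : ∀ c : ν → R, ∑ i, c i • (φ i x + top i x) = 0 →
      ∃ a : τ → R, ∀ y, ∑ i, c i • top i y = ∑ j, a j • h j y • C j y) :
    RelationsPersist (fun i y => φ i y + top i y) (Sum.elim β h) x := by
  intro c hc x' hx'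
  obtain ⟨a, ha⟩ := htop c hc
  have hsum : ∀ y, (∀ j, h j y = h j x) → ∑ i, c i • (φ i y + top i y) =
      ∑ i, Sum.elim c (fun j => a j * h j x) i • Sum.elim φ C i y := by
    intro y hy
    simp only [smul_add, sum_add_distrib, ha, hy, Fintype.sum_sum_type, Sum.elim_inl, Sum.elim_inr,
      mul_smul]
  rw [hsum x' fun j => hx' (Sum.inr j)]
  exact hx _ (by rw [← hsum x fun _ => rfl, hc]) x' fun j => hx' (Sum.inl j)

theorem ncard_exists_sum_smul_eq_zero_mul_le {F ν Ω W : Type*} [Field F] [Finite F] [Fintype ν]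
    [Finite Ω] [AddCommGroup W] [Module F W] (ψ : ν → Ω → W) {t M : ℕ}
    (hM : Fintype.card ν + t ≤ M) :
    {x | ∃ c : ν → F, {y | ∑ i, c i • ψ i y = 0}.ncard * Nat.card F ^ M < Nat.card Ω ∧
      ∑ i, c i • ψ i x = 0}.ncard * Nat.card F ^ t ≤ Nat.card Ω := by
  refine ncard_exists_mul_le fun c => ?_
  rw [Nat.card_fun, Nat.card_eq_fintype_card (α := ν), ← pow_add]
  by_cases hc : {y | ∑ i, c i • ψ i y = 0}.ncard * Nat.card F ^ M < Nat.card Ω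
  · simp only [hc, true_and]
    refine le_trans ?_ hc.le
    gcongr
    exact Nat.card_pos
  · simp [hc]

theorem exists_relationsPersist_of_erase {F ι : Type*} [Field F] [Finite F] [Finite ι]
    [DecidableEq ι] {G : ι → Type*} [∀ i, AddCommGroup (G i)] [∀ i, Module F (G i)]
    [∀ i, Finite (G i)] {W : Type*} [AddCommGroup W] [Module F W] {D : Finset (Finset ι)}
    (hD : IsLowerSet (D : Set (Finset ι))) {I : Finset ι} (hI : Maximal (· ∈ D) I) {ν : Type*}
    [Fintype ν] {ψ : ν → (∀ i, G i) → W} (hψ : ∀ i, HasMultilinearComponents F D (ψ i)) {M n : ℕ}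
    (hrank : ∀ f : (∀ i, G i) → W, IsMultilinearOn F I f →
      Nat.card (∀ i, G i) ≤ {x | f x = 0}.ncard * Nat.card F ^ M → HasPartitionRankLE F I f n) :
    ∃ (τ : Type) (_ : Fintype τ) (h : τ → (∀ i, G i) → F) (χ : ν ⊕ τ → (∀ i, G i) → W),
      Fintype.card τ ≤ Fintype.card ν * n ∧ (∀ j, ∃ T, IsMultilinearOn F T (h j)) ∧
      (∀ i, HasMultilinearComponents F (D.erase I) (χ i)) ∧
      ∀ {σ : Type} (β : σ → (∀ i, G i) → F) (x : ∀ i, G i),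
        (∀ c : ν → F, ∑ i, c i • ψ i x = 0 →
          Nat.card (∀ i, G i) ≤ {y | ∑ i, c i • ψ i y = 0}.ncard * Nat.card F ^ M) →
        RelationsPersist χ β x → RelationsPersist ψ (Sum.elim β h) x := by
  choose Φ hΦ hψ using hψ
  let φ : ν → (∀ i, G i) → W := fun i x => ∑ K ∈ D.erase I, Φ i K x
  obtain rfl : ψ = fun i x => φ i x + Φ i I x := by
    funext i x
    rw [hψ, sum_erase_add _ _ hI.prop]
  have hcΦ : ∀ c : ν → F, ∀ K ∈ D, IsMultilinearOn F K fun x => ∑ i, c i • Φ i K x :=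
    fun c K hK => IsMultilinearOn.sum univ fun i _ => (hΦ i K hK).const_smul (c i)
  have htop : ∀ c ∈ {c : ν → F | Nat.card (∀ i, G i) ≤
      {x | ∑ i, c i • (φ i x + Φ i I x) = 0}.ncard * Nat.card F ^ M},
      HasPartitionRankLE F I (fun x => ∑ i, c i • Φ i I x) n := by
    intro c hc
    have hsum : ∀ x, ∑ i, c i • (φ i x + Φ i I x) = ∑ K ∈ D, ∑ i, c i • Φ i K x := fun x => by
      simp only [φ, sum_erase_add _ _ hI.prop, smul_sum]
      exact sum_comm
    rw [Set.mem_ofPred_eq] at hc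
    simp only [hsum] at hc
    exact hrank _ (hcΦ c I hI.prop) (hc.trans
      (Nat.mul_le_mul_right _ (ncard_sum_eq_zero_le_ncard_maximal hI (hcΦ c))))
  obtain ⟨τ, _, A, h, C, hτ, hA, hh, hC, hspan⟩ :=
    HasPartitionRankLE.exists_forall_mem_eq_sum_smul htop
  have hmem : ∀ j, I \ A j ∈ D.erase I := fun j => by
    rw [mem_erase]
    refine ⟨fun heq => ?_, hD sdiff_subset hI.prop⟩
    obtain ⟨i, hi⟩ := (hA j).2
    exact (mem_sdiff.mp (heq ▸ (hA j).1 hi)).2 hi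
  refine ⟨τ, inferInstance, h, Sum.elim φ C, hτ, fun j => ⟨A j, hh j⟩, ?_, fun β x hx hβ => ?_⟩
  · rintro (i | j)
    · exact ⟨Φ i, fun K hK => hΦ i K (mem_of_mem_erase hK), fun _ => rfl⟩
    · exact (hC j).hasMultilinearComponents (hmem j)
  · exact hβ.of_eq_sum_smul fun c hc => hspan c (hx c hc)

theorem exists_forall_relationsPersist {ι : Type v} [Finite ι] [DecidableEq ι]
    (D : Finset (Finset ι)) (hD : IsLowerSet (D : Set (Finset ι))) : ∃ p : ℕ[X],
    ∀ {F : Type u} {G : ι → Type u} {W : Type u} [Field F] [Finite F] [∀ i, AddCommGroup (G i)]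
      [∀ i, Module F (G i)] [∀ i, Finite (G i)] [AddCommGroup W] [Module F W] {ν : Type}
      [Fintype ν] {ψ : ν → (∀ i, G i) → W} {t N : ℕ},
      (∀ i, HasMultilinearComponents F D (ψ i)) → Fintype.card ν + t ≤ N →
      ∃ (σ : Type) (_ : Fintype σ) (β : σ → (∀ i, G i) → F), Fintype.card σ ≤ p.eval N ∧
        (∀ j, ∃ T, IsMultilinearOn F T (β j)) ∧
        {x | ¬ RelationsPersist ψ β x}.ncard * Nat.card F ^ t ≤ Nat.card (∀ i, G i) := by
  induction hm : #D generalizing D with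
  | zero =>
    rw [card_eq_zero] at hm
    subst hm
    refine ⟨0, fun {F G W} _ _ _ _ _ _ _ ν _ ψ t N hψ _ => ?_⟩
    choose Φ _ hψ using hψ
    exact ⟨Empty, inferInstance, fun j => j.elim, by simp, fun j => j.elim,
      by simp [RelationsPersist, hψ]⟩
  | succ m ih =>
    obtain ⟨I, hI⟩ := D.exists_maximal (card_pos.mp (by omega))
    have hDI : IsLowerSet (↑(D.erase I) : Set (Finset ι)) := by
      rw [coe_erase]
      exact hD.erase fun K hK hIK => (hI.eq_of_le hK hIK).symm
    obtain ⟨p, ih⟩ := ih (D.erase I) hDI (by rw [card_erase_of_mem hI.prop, hm]; rfl)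
    obtain ⟨r, hr⟩ := exists_forall_hasPartitionRankLE.{u, v} #I
    let s : ℕ[X] := X * r.comp (X + 1)
    refine ⟨p.comp (X + s + 1) + s, fun {F G W} _ _ _ _ _ _ _ ν _ ψ t N hψ hN => ?_⟩
    obtain ⟨τ, _, h, χ, hτ, hh, hχ, hpersist⟩ := exists_relationsPersist_of_erase hD hI hψ
      (M := N + 1) fun f hf hzero => hr rfl hf hzero
    have hτs : Fintype.card τ ≤ s.eval N := hτ.trans <| by
      simp only [s, eval_mul, eval_X, eval_comp, eval_add, eval_one]
      gcongr
      omega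
    obtain ⟨σ, _, β, hσ, hβ, hbad⟩ := ih (t := t + 1) (N := N + s.eval N + 1) hχ
      (by rw [Fintype.card_sum]; omega)
    refine ⟨σ ⊕ τ, inferInstance, Sum.elim β h, ?_, ?_, ?_⟩
    · rw [Fintype.card_sum]
      simpa using Nat.add_le_add hσ hτs
    · rintro (j | j)
      exacts [hβ j, hh j]
    · have hrare := ncard_exists_sum_smul_eq_zero_mul_le (F := F) ψ (t := t + 1) (M := N + 1)
        (by omega)
      have hsub : {x | ¬ RelationsPersist ψ (Sum.elim β h) x} ⊆ {x | ¬ RelationsPersist χ β x} ∪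
          {x | ∃ c : ν → F, {y | ∑ i, c i • ψ i y = 0}.ncard * Nat.card F ^ (N + 1) <
            Nat.card (∀ i, G i) ∧ ∑ i, c i • ψ i x = 0} := by
        intro x
        contrapose!
        intro hx
        simp only [Set.mem_union, Set.mem_ofPred_eq, not_or, not_not, not_exists, not_and] at hx ⊢
        exact hpersist β x (fun c hc => not_lt.mp fun hlt => hx.2 c hlt hc) hx.1
      exact ncard_mul_pow_le_of_subset_union Finite.one_lt_card hsub hbad hrare

section Multiaffine

variable {F ι : Type*} [Field F] [DecidableEq ι] {G : ι → Type*} [∀ i, AddCommGroup (G i)]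
  [∀ i, Module F (G i)] {W W' U : Type*} [AddCommGroup W] [Module F W] [AddCommGroup W']
  [Module F W'] [AddCommGroup U] [Module F U] {f g : (∀ i, G i) → W}

theorem isMultiaffine_iff_isLinearMap :
    IsMultiaffine F f ↔ ∀ i x, IsLinearMap F fun a => f (update x i a) - f (update x i 0) := by
  refine ⟨fun hf i x => ?_, fun hf i x => ⟨(hf i x).mk', f (update x i 0), fun y => by simp⟩⟩
  obtain ⟨L, w, hL⟩ := hf i x
  simpa only [hL, map_zero, zero_add, add_sub_cancel_right] using L.isLinear

namespace IsMultiaffine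

theorem isLinearMap (hf : IsMultiaffine F f) (i : ι) (x : ∀ i, G i) :
    IsLinearMap F fun a => f (update x i a) - f (update x i 0) :=
  isMultiaffine_iff_isLinearMap.mp hf i x

theorem const (w : W) : IsMultiaffine F fun _ : ∀ i, G i => w :=
  fun _ _ => ⟨0, w, fun _ => by simp⟩

protected theorem sub (hf : IsMultiaffine F f) (hg : IsMultiaffine F g) :
    IsMultiaffine F fun x => f x - g x := by
  intro i x
  obtain ⟨L, w, hL⟩ := hf i x
  obtain ⟨L', w', hL'⟩ := hg i x
  refine ⟨L - L', w - w', fun a => ?_⟩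
  simp only [hL, hL', LinearMap.sub_apply, add_sub_add_comm]

theorem comp_linearMap (hf : IsMultiaffine F f) (φ : W →ₗ[F] W') :
    IsMultiaffine F fun x => φ (f x) := by
  intro i x
  obtain ⟨L, w, hL⟩ := hf i x
  exact ⟨φ ∘ₗ L, φ w, fun a => by simp only [hL, map_add, LinearMap.comp_apply]⟩

theorem of_forall_apply {κ : Type*} {f : (∀ i, G i) → κ → F}
    (hf : ∀ k, IsMultiaffine F fun x => f x k) : IsMultiaffine F f := by
  intro i x
  choose L w hL using fun k => hf k i x
  exact ⟨LinearMap.pi L, w, fun a => funext fun k => hL k a⟩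

theorem of_forall_linearMap_apply {f : (∀ i, G i) → U →ₗ[F] W}
    (hf : ∀ u, IsMultiaffine F fun x => f x u) : IsMultiaffine F f :=
  isMultiaffine_iff_isLinearMap.mpr fun i x =>
    { map_add := fun a b => LinearMap.ext fun u => ((hf u).isLinearMap i x).map_add a b
      map_smul := fun c a => LinearMap.ext fun u => ((hf u).isLinearMap i x).map_smul c a }

theorem comp_update (hf : IsMultiaffine F f) (i₀ : ι) (u : G i₀) :
    IsMultiaffine F fun x => f (update x i₀ u) := by
  intro i x
  rcases eq_or_ne i i₀ with rfl | hi
  · exact ⟨0, f (update x i u), fun a => by simp⟩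
  · simp only [update_comm hi]
    exact hf i (update x i₀ u)

end IsMultiaffine

theorem IsMultilinearOn.isMultiaffine {I : Finset ι} (hf : IsMultilinearOn F I f) :
    IsMultiaffine F f := by
  intro i x
  by_cases hi : i ∈ I
  · exact ⟨hf.toLinearMap hi x, 0, fun a => by simp⟩
  · exact ⟨0, f x, fun a => by simp [hf.map_update_of_notMem i hi]⟩

namespace HasMultilinearComponents

variable {D : Finset (Finset ι)}

protected theorem add (hf : HasMultilinearComponents F D f) (hg : HasMultilinearComponents F D g) :
    HasMultilinearComponents F D fun x => f x + g x := by
  obtain ⟨Φ, hΦ, hf⟩ := hf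
  obtain ⟨Ψ, hΨ, hg⟩ := hg
  exact ⟨fun I x => Φ I x + Ψ I x, fun I hI => (hΦ I hI).add (hΨ I hI), fun x => by
    simp only [hf, hg, sum_add_distrib]⟩

protected theorem sum {κ : Type*} [Fintype κ] {f : κ → (∀ i, G i) → W}
    (hf : ∀ k, HasMultilinearComponents F D (f k)) :
    HasMultilinearComponents F D fun x => ∑ k, f k x := by
  choose Φ hΦ hf using hf
  refine ⟨fun I x => ∑ k, Φ k I x, fun I hI => IsMultilinearOn.sum univ fun k _ => hΦ k I hI,
    fun x => ?_⟩
  simp only [hf]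
  exact sum_comm

theorem mono {D' : Finset (Finset ι)} (hf : HasMultilinearComponents F D f) (hD : D ⊆ D') :
    HasMultilinearComponents F D' f := by
  obtain ⟨Φ, hΦ, hf⟩ := hf
  simp only [funext hf, ← sum_coe_sort D]
  exact HasMultilinearComponents.sum fun I => (hΦ I I.2).hasMultilinearComponents (hD I.2)

theorem uncurry {i₀ : ι} {K : Finset ι} (hi₀ : i₀ ∉ K) {C : (∀ i, G i) → G i₀ →ₗ[F] W}
    (hC : HasMultilinearComponents F K.powerset C) :
    HasMultilinearComponents F (insert i₀ K).powerset fun x => C x (x i₀) := by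
  obtain ⟨Φ, hΦ, hC⟩ := hC
  simp only [hC, LinearMap.sum_apply, ← sum_coe_sort K.powerset]
  refine HasMultilinearComponents.sum fun ⟨I, hI⟩ => ?_
  have hIK := mem_powerset.mp hI
  exact ((hΦ I hI).uncurry fun h => hi₀ (hIK h)).hasMultilinearComponents
    (mem_powerset.mpr (insert_subset_insert i₀ hIK))

end HasMultilinearComponents

end Multiaffine

section MultiaffineComponents

variable {F : Type*} {ι : Type*} {G : ι → Type u} {W : Type u} [Field F] [DecidableEq ι]
  [∀ i, AddCommGroup (G i)] [∀ i, Module F (G i)] [AddCommGroup W] [Module F W]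
  {f : (∀ i, G i) → W}

theorem IsMultiaffine.hasMultilinearComponents_powerset (hf : IsMultiaffine F f) {K : Finset ι}
    (hK : ∀ i ∉ K, ∀ x a, f (update x i a) = f x) : HasMultilinearComponents F K.powerset f := by
  induction K using Finset.induction_on generalizing W with
  | empty =>
    have hf₀ : IsMultilinearOn F ∅ f := ⟨by simp, by simp, hK⟩
    exact hf₀.hasMultilinearComponents (by simp)
  | insert i₀ K hi₀ ih =>
    have hindep : ∀ u, ∀ i ∉ K, ∀ x a, f (update (update x i a) i₀ u) = f (update x i₀ u) := by
      intro u i hi x a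
      rcases eq_or_ne i i₀ with rfl | hne
      · rw [update_idem]
      · rw [update_comm hne, hK i (by simp [hne, hi])]
    have hlin := ih (W := G i₀ →ₗ[F] W) (f := fun x => (hf.isLinearMap i₀ x).mk')
      (of_forall_linearMap_apply fun u => (hf.comp_update i₀ u).sub (hf.comp_update i₀ 0))
      fun i hi x a => LinearMap.ext fun u => by simp [hindep _ i hi]
    have hconst := (ih (hf.comp_update i₀ 0) (hindep 0)).mono
      (powerset_mono.mpr (subset_insert i₀ K))
    simpa using (hlin.uncurry hi₀).add hconst

theorem IsMultiaffine.hasMultilinearComponents [Fintype ι] (hf : IsMultiaffine F f) :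
    HasMultilinearComponents F univ f := by
  simpa using hf.hasMultilinearComponents_powerset (K := univ) (by simp)

end MultiaffineComponents

section ColumnPermutation

variable {F U ν : Type*} [Field F] [Fintype ν] [AddCommGroup U] [Module F U]

theorem range_pi_le_range_pi {A A' : ν → U →ₗ[F] F}
    (h : ∀ c : ν → F, ∑ i, c i • A' i = 0 → ∑ i, c i • A i = 0) :
    (LinearMap.pi A).range ≤ (LinearMap.pi A').range := by
  classical
  rintro _ ⟨u, rfl⟩
  by_contra hu
  obtain ⟨φ, hφ, hker⟩ := Submodule.exists_le_ker_of_notMem hu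
  have hsum : ∀ (B : ν → U →ₗ[F] F) v, φ (LinearMap.pi B v) =
      (∑ i, (φ fun j => if i = j then 1 else 0) • B i) v := fun B v => by
    simp [LinearMap.pi_apply_eq_sum_univ φ (LinearMap.pi B v), mul_comm]
  have hA' : ∑ i, (φ fun j => if i = j then 1 else 0) • A' i = 0 :=
    LinearMap.ext fun v => (hsum A' v).symm.trans (hker ⟨v, rfl⟩)
  rw [hsum, h _ hA', LinearMap.zero_apply] at hφ
  exact hφ rfl

theorem exists_equiv_of_range_eq {A B : Type*} [AddGroup A] [Finite A] [AddGroup B] {f g : A →+ B}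
    (h : f.range = g.range) : ∃ e : A ≃ A, ∀ a, g (e a) = f a := by
  have hker : Nat.card f.ker = Nat.card g.ker := by
    refine Nat.eq_of_mul_eq_mul_right (Nat.pos_of_ne_zero f.ker.index_ne_zero_of_finite) ?_
    rw [AddSubgroup.card_mul_index, AddSubgroup.index_ker, h, ← AddSubgroup.index_ker,
      AddSubgroup.card_mul_index]
  have hfiber : ∀ b, Nonempty ({a // f a = b} ≃ {a // g a = b}) := by
    intro b
    by_cases hb : b ∈ f.range
    · obtain ⟨a, ha⟩ := hb
      obtain ⟨a', rfl⟩ : b ∈ g.range := h ▸ ⟨a, ha⟩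
      have e := f.fiberEquivKer a
      rw [ha] at e
      exact ⟨(e.trans (Finite.card_eq.mp hker).some).trans (g.fiberEquivKer a').symm⟩
    · have : IsEmpty {a // f a = b} := ⟨fun a => hb ⟨a, a.2⟩⟩
      have : IsEmpty {a // g a = b} := ⟨fun a => hb (h ▸ ⟨a, a.2⟩)⟩
      exact ⟨Equiv.equivOfIsEmpty _ _⟩
  exact ⟨Equiv.ofFiberEquiv fun b => (hfiber b).some, Equiv.ofFiberEquiv_map _⟩

variable [Finite U]

theorem ncard_forall_apply_eq_zero_mul_le {L : U →ₗ[F] F} (hL : L ≠ 0) (M : ℕ) :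
    {y : Fin M → U | ∀ j, L (y j) = 0}.ncard * Nat.card F ^ M ≤ Nat.card (Fin M → U) := by
  have hpi : {y : Fin M → U | ∀ j, L (y j) = 0}.ncard = {u | L u = 0}.ncard ^ M := by
    have hequiv := Nat.card_congr (Equiv.subtypePiEquivPi (p := fun (_ : Fin M) u => L u = 0))
    rw [Nat.card_pi, prod_const, Finset.card_univ, Fintype.card_fin] at hequiv
    exact hequiv
  have hrank : finrank F L.range = 1 := by
    rw [LinearMap.range_eq_top.mpr (LinearMap.surjective hL), finrank_top, finrank_self]
  rw [hpi, ← mul_pow, Nat.card_fun, Nat.card_fin, ← ncard_ker_mul_card_pow_finrank_range L, hrank,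
    pow_one]

theorem exists_ncard_sum_smul_apply_eq_zero_mul_le [Finite F] {Ω : Type*} [Finite Ω]
    (A : ν → Ω → U →ₗ[F] F) {t M : ℕ} (hM : Fintype.card ν + t ≤ M) :
    ∃ y : Fin M → U, {x | ∃ c : ν → F, ∑ i, c i • A i x ≠ 0 ∧
      ∀ j, (∑ i, c i • A i x) (y j) = 0}.ncard * Nat.card F ^ t ≤ Nat.card Ω := by
  refine exists_ncard_mul_le fun x => ncard_exists_mul_le fun c => ?_
  rw [Nat.card_fun, Nat.card_eq_fintype_card (α := ν), ← pow_add]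
  by_cases hc : ∑ i, c i • A i x = 0
  · simp [hc]
  · simp only [ne_eq, hc, not_false_eq_true, true_and]
    refine le_trans ?_ (ncard_forall_apply_eq_zero_mul_le hc M)
    gcongr
    exact Nat.card_pos

theorem RelationsPersist.exists_equiv {Ω σ κ : Type*} {A : ν → Ω → U →ₗ[F] F}
    {β : σ → Ω → F} {x x' : Ω} (hA : RelationsPersist A β x) (hβ : ∀ j, β j x' = β j x)
    {y : κ → U}
    (hy : ∀ c : ν → F, (∀ j, (∑ i, c i • A i x) (y j) = 0) → ∑ i, c i • A i x = 0)
    (hxy : ∀ i j, A i x' (y j) = A i x (y j)) :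
    ∃ e : U ≃ U, ∀ u i, A i x' (e u) = A i x u := by
  have hle : (LinearMap.pi fun i => A i x').range ≤ (LinearMap.pi fun i => A i x).range :=
    range_pi_le_range_pi fun c hc => hA c hc x' hβ
  have hge : (LinearMap.pi fun i => A i x).range ≤ (LinearMap.pi fun i => A i x').range := by
    refine range_pi_le_range_pi fun c hc => hy c fun j => ?_
    simpa [hxy] using LinearMap.congr_fun hc (y j)
  obtain ⟨e, he⟩ := exists_equiv_of_range_eq (f := (LinearMap.pi fun i => A i x).toAddMonoidHom)
    (g := (LinearMap.pi fun i => A i x').toAddMonoidHom)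
    (SetLike.coe_injective (congrArg _ (le_antisymm hge hle)))
  exact ⟨e, fun u i => congrFun (he u) i⟩

end ColumnPermutation

theorem exists_forall_exists_equiv_apply_eq (ι : Type v) [Finite ι] [DecidableEq ι] : ∃ p : ℕ[X],
    ∀ {F : Type u} {G : ι → Type u} {U : Type u} [Field F] [Finite F] [∀ i, AddCommGroup (G i)]
      [∀ i, Module F (G i)] [∀ i, Finite (G i)] [AddCommGroup U] [Module F U] [Finite U]
      {ν : Type} [Fintype ν] {A : ν → (∀ i, G i) → U →ₗ[F] F},
      (∀ i, IsMultiaffine F (A i)) → ∀ t,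
      ∃ (σ : Type) (_ : Fintype σ) (β : σ → (∀ i, G i) → F),
        Fintype.card σ ≤ p.eval (Fintype.card ν + t) ∧ (∀ j, IsMultiaffine F (β j)) ∧
        {x | ¬ ∀ x', (∀ j, β j x' = β j x) →
          ∃ e : U ≃ U, ∀ u i, A i x' (e u) = A i x u}.ncard * Nat.card F ^ t ≤
            Nat.card (∀ i, G i) := by
  have := Fintype.ofFinite ι
  obtain ⟨p, hp⟩ := exists_forall_relationsPersist.{u, v} (univ : Finset (Finset ι))
    (by simpa using isLowerSet_univ)
  refine ⟨p.comp (X + 1) + (X + 1) * X, fun {F G U} _ _ _ _ _ _ _ _ ν _ A hA t => ?_⟩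
  let M := Fintype.card ν + t + 1
  obtain ⟨σ, _, β, hσ, hβ, hpersist⟩ := hp (t := t + 1) (N := M)
    (fun i => (hA i).hasMultilinearComponents) (by omega)
  obtain ⟨y, hy⟩ := exists_ncard_sum_smul_apply_eq_zero_mul_le A (t := t + 1) (M := M) (by omega)
  refine ⟨σ ⊕ Fin M × ν, inferInstance, Sum.elim β fun p x => A p.2 x (y p.1), ?_, ?_, ?_⟩
  · simp only [Fintype.card_sum, Fintype.card_prod, Fintype.card_fin, eval_add, eval_comp, eval_mul,
      eval_X, eval_one]
    gcongr
    omega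
  · rintro (j | ⟨j, i⟩)
    · obtain ⟨T, hT⟩ := hβ j
      exact hT.isMultiaffine
    · exact (hA i).comp_linearMap (LinearMap.applyₗ (y j))
  · refine ncard_mul_pow_le_of_subset_union Finite.one_lt_card (fun x hx => ?_) hpersist hy
    by_contra hgood
    simp only [Set.mem_union, Set.mem_ofPred_eq, not_or, not_not, not_exists, not_and'] at hgood
    refine hx fun x' hxx' => ?_
    exact hgood.1.exists_equiv (fun j => hxx' (.inl j)) (fun c hc => hgood.2 c hc)
      fun i j => hxx' (.inr (j, i))

namespace IsMultiaffine

variable {F : Type*} [Field F] {k : ℕ} {G : Fin (k + 1) → Type*} {W : Type*}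
  [∀ i, AddCommGroup (G i)] [∀ i, Module F (G i)] [AddCommGroup W] [Module F W]
  {α : (∀ i, G i) → W}

theorem comp_snoc (hα : IsMultiaffine F α) (y : G (Fin.last k)) :
    IsMultiaffine F fun x : ∀ i : Fin k, G i.castSucc => α (Fin.snoc x y) := by
  intro i x
  obtain ⟨L, w, hL⟩ := hα i.castSucc (Fin.snoc x y)
  refine ⟨L, w, fun a => ?_⟩
  rw [← hL a]
  exact congrArg α (Fin.snoc_update (α := G) ..)

/-- The linear part of a multiaffine map in its last coordinate, for fixed values `x` of the other
coordinates. -/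
def lastLinearMap (hα : IsMultiaffine F α) (x : ∀ i : Fin k, G i.castSucc) :
    G (Fin.last k) →ₗ[F] W :=
  (hα.isLinearMap (Fin.last k) (Fin.snoc x 0)).mk'

theorem lastLinearMap_apply (hα : IsMultiaffine F α) (x : ∀ i : Fin k, G i.castSucc)
    (y : G (Fin.last k)) :
    hα.lastLinearMap x y = α (Fin.snoc x y) - α (Fin.snoc x 0) := by
  simp only [lastLinearMap, IsLinearMap.mk'_apply, Fin.update_snoc_last]

theorem lastLinearMap_isMultiaffine (hα : IsMultiaffine F α) : IsMultiaffine F hα.lastLinearMap :=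
  of_forall_linearMap_apply fun y => by
    simpa only [lastLinearMap_apply] using (hα.comp_snoc y).sub (hα.comp_snoc 0)

end IsMultiaffine

section DenseColumns

variable {k : ℕ} {G : Fin (k + 1) → Type*} {W : Type*} [Fintype (G (Fin.last k))]

/-- The set of `ε`-dense columns of `{z | α z ∈ S}`: those `x` for which `α (x, y) ∈ S` for at least
a proportion `ε` of all `y` in the last factor. -/
def denseColumns (α : (∀ i, G i) → W) (S : Set W) (ε : ℝ) : Set (∀ i : Fin k, G i.castSucc) :=
  {x | ε * Fintype.card (G (Fin.last k)) ≤
    (Nat.card {y : G (Fin.last k) | α (Fin.snoc x y) ∈ S} : ℝ)}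

theorem mem_denseColumns_iff_of_equiv {α : (∀ i, G i) → W} {x x' : ∀ i : Fin k, G i.castSucc}
    (e : G (Fin.last k) ≃ G (Fin.last k))
    (he : ∀ y, α (Fin.snoc x' (e y)) = α (Fin.snoc x y)) (S : Set W) (ε : ℝ) :
    x' ∈ denseColumns α S ε ↔ x ∈ denseColumns α S ε := by
  have hcard : Nat.card {y | α (Fin.snoc x y) ∈ S} = Nat.card {y | α (Fin.snoc x' y) ∈ S} :=
    Nat.card_congr (e.subtypeEquiv fun y => by simp only [Set.mem_ofPred_eq, he])
  simp only [denseColumns, Set.mem_ofPred_eq] at hcard ⊢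
  rw [hcard]

theorem denseColumns_eq_empty [Nonempty (G (Fin.last k))] (α : (∀ i, G i) → W) (S : Set W) {ε : ℝ}
    (hε : 1 < ε) : denseColumns α S ε = ∅ := by
  refine Set.eq_empty_iff_forall_notMem.mpr fun x hx => ?_
  have hle : Nat.card {y : G (Fin.last k) | α (Fin.snoc x y) ∈ S} ≤ Fintype.card _ :=
    (Finite.card_subtype_le _).trans_eq Nat.card_eq_fintype_card
  have hpos : (0 : ℝ) < Fintype.card (G (Fin.last k)) := by exact_mod_cast Fintype.card_pos
  have hlt : (Fintype.card (G (Fin.last k)) : ℝ) < ε * Fintype.card (G (Fin.last k)) :=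
    lt_mul_of_one_lt_left hpos hε
  exact (hlt.trans_le (hx.trans (by exact_mod_cast hle))).false

end DenseColumns

section Layers

variable {Ω V : Type*}

/-- The union of the layers of `β` which meet both `X` and its complement. -/
def mixedLayers (β : Ω → V) (X : Set Ω) : Set Ω :=
  {x | ¬ ∀ x', β x' = β x → (x' ∈ X ↔ x ∈ X)}

theorem mixedLayers_eq_empty_of_forall_iff (β : Ω → V) {X : Set Ω} (hX : ∀ x x', x' ∈ X ↔ x ∈ X) :
    mixedLayers β X = ∅ :=
  Set.eq_empty_iff_forall_notMem.mpr fun x hx => hx fun x' _ => hX x x'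

theorem natCard_le_of_subset_mixedLayers [Finite Ω] {β : Ω → V} {X Y : Set Ω} {E : ℝ}
    (hE : ((mixedLayers β X).ncard : ℝ) ≤ E) (hY : Y ⊆ mixedLayers β X) : (Nat.card Y : ℝ) ≤ E :=
  le_trans (by exact_mod_cast Set.ncard_le_ncard hY) hE

variable [Finite V] (β : Ω → V) (X : Set Ω)

theorem exists_iUnion_layers_eq (P : V → Prop) :
    ∃ (m : ℕ) (μ : Fin m → V), (∀ j, P (μ j)) ∧ ⋃ j, {x | β x = μ j} = {x | P (β x)} := by
  obtain ⟨m, μ, hμ⟩ := (Set.toFinite {v | P v}).fin_embedding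
  have hP : ∀ v, P v ↔ ∃ j, μ j = v := fun v => (Set.ext_iff.mp hμ v).symm
  refine ⟨m, μ, fun j => (hP _).mpr ⟨j, rfl⟩, ?_⟩
  ext x
  simp [hP, eq_comm]

theorem exists_layers_subset : ∃ (m : ℕ) (μ : Fin m → V), (∀ j, {x | β x = μ j} ⊆ X) ∧
    X \ ⋃ j, {x | β x = μ j} ⊆ mixedLayers β X := by
  obtain ⟨m, μ, hμ, hunion⟩ := exists_iUnion_layers_eq β fun v => {x | β x = v} ⊆ X
  refine ⟨m, μ, hμ, ?_⟩
  rw [hunion]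
  rintro x ⟨hxX, hx⟩ hmixed
  exact hx fun x' hx' => (hmixed x' hx').mpr hxX

theorem exists_subset_layers : ∃ (m : ℕ) (μ : Fin m → V), X ⊆ ⋃ j, {x | β x = μ j} ∧
    (⋃ j, {x | β x = μ j}) \ X ⊆ mixedLayers β X := by
  obtain ⟨m, μ, -, hunion⟩ := exists_iUnion_layers_eq β fun v => ∃ x ∈ X, β x = v
  refine ⟨m, μ, ?_⟩
  rw [hunion]
  refine ⟨fun x hx => ⟨x, hx, rfl⟩, ?_⟩
  rintro x ⟨⟨x', hx'X, hx'⟩, hx⟩ hmixed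
  exact hx ((hmixed x' hx').mp hx'X)

end Layers

theorem exists_forall_ncard_mixedLayers_denseColumns_mul_le (k : ℕ) : ∃ p : ℕ[X],
    ∀ {F : Type u} {G : Fin (k + 1) → Type u} [Field F] [Finite F] [∀ i, AddCommGroup (G i)]
      [∀ i, Module F (G i)] [∀ i, Fintype (G i)] {r : ℕ} {α : (∀ i, G i) → Fin r → F},
      IsMultiaffine F α → ∀ t, ∃ s ≤ p.eval (r + t),
        ∃ β : (∀ i : Fin k, G i.castSucc) → Fin s → F, IsMultiaffine F β ∧
          ∀ S ε, (mixedLayers β (denseColumns α S ε)).ncard * Nat.card F ^ t ≤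
            Nat.card (∀ i : Fin k, G i.castSucc) := by
  obtain ⟨p, hp⟩ := exists_forall_exists_equiv_apply_eq.{u, 0} (Fin k)
  refine ⟨p + X, fun {F G} _ _ _ _ _ r α hα t => ?_⟩
  obtain ⟨σ, _, β, hσ, hβ, hbad⟩ := hp
    (A := fun i x => LinearMap.proj i ∘ₗ hα.lastLinearMap x)
    (fun i => hα.lastLinearMap_isMultiaffine.comp_linearMap
      (LinearMap.compRight F (LinearMap.proj i))) t
  let γ : σ ⊕ Fin r → (∀ i : Fin k, G i.castSucc) → F :=
    Sum.elim β fun i x => α (Fin.snoc x 0) i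
  have hγ : ∀ j, IsMultiaffine F (γ j) := by
    rintro (j | i)
    exacts [hβ j, (hα.comp_snoc 0).comp_linearMap (LinearMap.proj i)]
  let e := Fintype.equivFin (σ ⊕ Fin r)
  refine ⟨Fintype.card (σ ⊕ Fin r), ?_, fun x j => γ (e.symm j) x,
    IsMultiaffine.of_forall_apply fun j => hγ _, fun S ε => le_trans ?_ hbad⟩
  · rw [Fintype.card_sum, Fintype.card_fin, eval_add, eval_X]
    rw [Fintype.card_fin] at hσ
    omega
  · refine Nat.mul_le_mul_right _ (Set.ncard_le_ncard fun x hx hgood => hx fun x' hxx' => ?_)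
    have hγx : ∀ j, γ j x' = γ j x := fun j => by simpa using congrFun hxx' (e j)
    obtain ⟨π, hπ⟩ := hgood x' fun j => hγx (.inl j)
    have hcolumn : ∀ y, α (Fin.snoc x' (π y)) = α (Fin.snoc x y) := by
      intro y
      ext i
      have hlinear := hπ y i
      simp only [LinearMap.comp_apply, hα.lastLinearMap_apply, LinearMap.proj_apply,
        Pi.sub_apply] at hlinear
      have hconst : α (Fin.snoc x' 0) i = α (Fin.snoc x 0) i := hγx (.inr i)
      rwa [hconst, sub_left_inj] at hlinear
    exact mem_denseColumns_iff_of_equiv π hcolumn S ε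

theorem exists_nat_le_logb_mul_inv {q ε : ℝ} (hq : 1 < q) (hε₀ : 0 < ε) (hε₁ : ε ≤ 1) :
    ∃ t : ℕ, t ≤ Real.logb q (q * ε⁻¹) ∧ ε⁻¹ ≤ q ^ t := by
  refine ⟨⌈Real.logb q ε⁻¹⌉₊, ?_, ?_⟩
  · rw [Real.logb_mul (by positivity) (by positivity), Real.logb_self_eq_one hq, add_comm]
    exact (Nat.ceil_lt_add_one (Real.logb_nonneg hq ((one_le_inv₀ hε₀).mpr hε₁))).le
  · rw [← Real.rpow_natCast, ← Real.logb_le_iff_le_rpow hq (by positivity)]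
    exact Nat.le_ceil _

theorem one_le_logb_mul_inv {q ε : ℝ} (hq : 1 < q) (hε₀ : 0 < ε) (hε₁ : ε ≤ 1) :
    1 ≤ Real.logb q (q * ε⁻¹) := by
  rw [Real.logb_mul (by positivity) (by positivity), Real.logb_self_eq_one hq]
  exact le_add_of_nonneg_right (Real.logb_nonneg hq ((one_le_inv₀ hε₀).mpr hε₁))

theorem natCast_le_of_le_add_two_pow {r t a s : ℕ} {L : ℝ} (hr : r ≠ 0) (hL : 1 ≤ L)
    (ht : (t : ℝ) ≤ L) (hs : s ≤ (r + t + 2) ^ a) :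
    (s : ℝ) ≤ 5 ^ (2 * (a + 1)) * ((r : ℝ) * L) ^ (2 * (a + 1)) := by
  have hr' : (1 : ℝ) ≤ r := by exact_mod_cast Nat.one_le_iff_ne_zero.mpr hr
  have hbase : (r : ℝ) + t + 2 ≤ 5 * (r * L) := by nlinarith
  have hone : (1 : ℝ) ≤ 5 * (r * L) := by nlinarith
  calc (s : ℝ) ≤ ((r : ℝ) + t + 2) ^ a := by exact_mod_cast hs
    _ ≤ (5 * (r * L)) ^ a := by gcongr
    _ ≤ (5 * (r * L)) ^ (2 * (a + 1)) := pow_le_pow_right₀ hone (by omega)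
    _ = _ := mul_pow _ _ _

theorem exists_isMultiaffine_ncard_mixedLayers_denseColumns_le (k : ℕ) : ∃ a : ℕ,
    ∀ {F : Type u} {G : Fin (k + 1) → Type u} [Field F] [Fintype F] [∀ i, AddCommGroup (G i)]
      [∀ i, Module F (G i)] [∀ i, Fintype (G i)] {r : ℕ} {α : (∀ i, G i) → Fin r → F},
      IsMultiaffine F α → ∀ S {ε : ℝ}, 0 < ε →
      ∃ s : ℕ, (s : ℝ) ≤ 5 ^ (2 * (a + 1)) * ((r : ℝ) *
          Real.logb (Fintype.card F) ((Fintype.card F : ℝ) * ε⁻¹)) ^ (2 * (a + 1)) ∧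
        ∃ β : (∀ i : Fin k, G i.castSucc) → Fin s → F, IsMultiaffine F β ∧
          ((mixedLayers β (denseColumns α S ε)).ncard : ℝ) ≤
            ε * Fintype.card (∀ i : Fin k, G i.castSucc) := by
  obtain ⟨p, hp⟩ := exists_forall_ncard_mixedLayers_denseColumns_mul_le.{u} k
  obtain ⟨a, ha⟩ := exists_forall_eval_le_pow p
  refine ⟨a, fun {F G} _ _ _ _ _ r α hα S ε hε => ?_⟩
  by_cases htriv : ∀ x x', x' ∈ denseColumns α S ε ↔ x ∈ denseColumns α S ε
  · refine ⟨0, ?_, fun _ => 0, IsMultiaffine.const 0, ?_⟩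
    · rw [Nat.cast_zero]
      exact mul_nonneg (by positivity) (Even.pow_nonneg (even_two_mul _) _)
    · rw [mixedLayers_eq_empty_of_forall_iff _ htriv, Set.ncard_empty, Nat.cast_zero]
      positivity
  have hε₁ : ε ≤ 1 := not_lt.mp fun h => htriv (by simp [denseColumns_eq_empty α S h])
  have hr : r ≠ 0 := by
    rintro rfl
    exact htriv fun x x' =>
      mem_denseColumns_iff_of_equiv (.refl _) (fun y => Subsingleton.elim _ _) S ε
  have hq : (1 : ℝ) < Fintype.card F := by exact_mod_cast Fintype.one_lt_card
  obtain ⟨t, ht, hεt⟩ := exists_nat_le_logb_mul_inv hq hε hε₁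
  obtain ⟨s, hs, β, hβ, hbad⟩ := hp hα t
  refine ⟨s, natCast_le_of_le_add_two_pow hr (one_le_logb_mul_inv hq hε hε₁) ht
    (hs.trans (ha _)), β, hβ, ?_⟩
  have hbadR : ((mixedLayers β (denseColumns α S ε)).ncard : ℝ) * (Fintype.card F : ℝ) ^ t ≤
      Fintype.card (∀ i : Fin k, G i.castSucc) := by
    rw [← Nat.card_eq_fintype_card (α := F), ← Nat.card_eq_fintype_card]
    exact_mod_cast hbad S ε
  rw [← inv_mul_le_iff₀ hε, mul_comm]
  exact (mul_le_mul_of_nonneg_left hεt (Nat.cast_nonneg _)).trans hbadR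

/-- **Structure of the set of dense columns of a variety.**
For every number `k + 1 ≥ 1` of coordinates there are constants `C, D > 0` such that:
for every multiaffine `α : G 0 × ⋯ × G k → 𝔽^r`, every `S ⊆ 𝔽^r` and `ε > 0`, the set
`X` of `ε`-dense columns, i.e. of those `x ∈ G 0 × ⋯ × G (k-1)` for which
`α (x, y) ∈ S` for at least `ε |G k|` values `y ∈ G k`, is both internally and
externally `ε`-approximated by layers of a multiaffine map
`β : G 0 × ⋯ × G (k-1) → 𝔽^s` with `s ≤ C (r log_{|𝔽|}(|𝔽| ε⁻¹))^D`. -/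
theorem dense_columns_structure :
    ∀ k : ℕ, ∃ C D : ℝ, 0 < C ∧ 0 < D ∧
      ∀ (𝔽 : Type) [Field 𝔽] [Fintype 𝔽]
        (G : Fin (k + 1) → Type) [∀ i, AddCommGroup (G i)] [∀ i, Module 𝔽 (G i)]
        [∀ i, Fintype (G i)] [∀ i, FiniteDimensional 𝔽 (G i)]
        (r : ℕ) (α : (∀ i, G i) → (Fin r → 𝔽)), IsMultiaffine 𝔽 α →
      ∀ (S : Set (Fin r → 𝔽)) (ε : ℝ), 0 < ε →
      ∀ X : Set (∀ i : Fin k, G i.castSucc),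
        X = {x | ε * Fintype.card (G (Fin.last k)) ≤
              (Nat.card {y : G (Fin.last k) | α (Fin.snoc x y) ∈ S} : ℝ)} →
      ∃ s : ℕ,
        (s : ℝ) ≤ C * ((r : ℝ) *
          Real.logb (Fintype.card 𝔽) ((Fintype.card 𝔽 : ℝ) * ε⁻¹)) ^ D ∧
        ∃ β : (∀ i : Fin k, G i.castSucc) → (Fin s → 𝔽), IsMultiaffine 𝔽 β ∧
          -- internal ε-approximation of X by layers of β
          (∃ (m : ℕ) (μ : Fin m → (Fin s → 𝔽)),
            (∀ j, {x | β x = μ j} ⊆ X) ∧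
            (Nat.card ↥(X \ ⋃ j, {x | β x = μ j}) : ℝ)
              ≤ ε * Fintype.card (∀ i : Fin k, G i.castSucc)) ∧
          -- external ε-approximation of X by layers of β
          (∃ (m : ℕ) (μ : Fin m → (Fin s → 𝔽)),
            X ⊆ (⋃ j, {x | β x = μ j}) ∧
            (Nat.card ↥((⋃ j, {x | β x = μ j}) \ X) : ℝ)
              ≤ ε * Fintype.card (∀ i : Fin k, G i.castSucc)) := by
  intro k
  obtain ⟨a, h⟩ := exists_isMultiaffine_ncard_mixedLayers_denseColumns_le k
  refine ⟨5 ^ (2 * (a + 1)), (2 * (a + 1) : ℕ), by positivity, by positivity, ?_⟩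
  intro 𝔽 _ _ G _ _ _ _ r α hα S ε hε X hX
  obtain rfl : X = denseColumns α S ε := hX
  obtain ⟨s, hs, β, hβ, hmixed⟩ := h hα S hε
  obtain ⟨m, μ, hμ, hinner⟩ := exists_layers_subset β (denseColumns α S ε)
  obtain ⟨m', μ', hμ', houter⟩ := exists_subset_layers β (denseColumns α S ε)
  rw [Real.rpow_natCast]
  exact ⟨s, hs, β, hβ, ⟨m, μ, hμ, natCard_le_of_subset_mixedLayers hmixed hinner⟩,
    ⟨m', μ', hμ', natCard_le_of_subset_mixedLayers hmixed houter⟩⟩
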